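/- arXiv:1606.00555 — 4 statements merged into one kernel-verified Lean document; each statement's English description precedes it below -/
import Mathlib

section
/- Assume σ₂ : ℝ → ℝ is C¹ with σ₂(x + 1/2) = σ₂(x) for all x, and set M̃_E := max_{x ∈ [0,1/2]} |σ₂'(x)|. Let σ_{1,0}, σ_{3,0} : ℝ → ℝ be C¹, 1-periodic, with zero mean over [0,1), and set M_I := TV σ_{1,0} + TV σ_{3,0} (total variations over one period). Suppose M_I / M̃_E > (3 / ln(13/12)) · (β/α). Then for every T > 6/(α M_I) there is no classical solution (σ₁, σ₃) of the system of weakly nonlinear gas dynamics on ℝ × [0,T] with these initial data such that σ₁, σ₃ are C² and 1-periodic in x; that is, the classical solution blows up at some time T_b ≤ 6/(α M_I). -/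
open MeasureTheory Set

/-- Classical solution of the system of weakly nonlinear gas dynamics on
`ℝ × [0,T]`: 1-periodic in `x` and satisfying both equations pointwise
(time derivatives taken within `[0,T]`). -/
def IsClassicalSolution (α β : ℝ) (σ₂ : ℝ → ℝ) (T : ℝ)
    (σ₁ σ₃ : ℝ → ℝ → ℝ) : Prop :=
  (∀ x t, σ₁ (x + 1) t = σ₁ x t) ∧ (∀ x t, σ₃ (x + 1) t = σ₃ x t) ∧
  ∀ x : ℝ, ∀ t ∈ Set.Icc (0 : ℝ) T,
    (derivWithin (fun s => σ₁ x s) (Set.Icc 0 T) t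
        + (α / 2) * deriv (fun y => (σ₁ y t) ^ 2) x
        + (β / 2) * ∫ y in (-1 : ℝ)..1,
            (1 / 2) * deriv σ₂ ((x + y) / 2) * σ₃ y t = 0) ∧
    (derivWithin (fun s => σ₃ x s) (Set.Icc 0 T) t
        - (α / 2) * deriv (fun y => (σ₃ y t) ^ 2) x
        - (β / 2) * ∫ y in (-1 : ℝ)..1,
            (1 / 2) * deriv σ₂ ((x + y) / 2) * σ₁ y t = 0)

/-- regularity data -/
structure Reg (u w wx wt : ℝ → ℝ → ℝ) : Prop where
  per : ∀ x t, u (x + 1) t = u x t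
  wper : ∀ x t, w (x + 1) t = w x t
  cu : Continuous (fun p : ℝ × ℝ => u p.1 p.2)
  cw : Continuous (fun p : ℝ × ℝ => w p.1 p.2)
  cwx : Continuous (fun p : ℝ × ℝ => wx p.1 p.2)
  cwt : Continuous (fun p : ℝ × ℝ => wt p.1 p.2)
  hux : ∀ x t, HasDerivAt (fun y => u y t) (w x t) x
  hwx : ∀ x t, HasDerivAt (fun y => w y t) (wx x t) x
  hwt : ∀ x t, HasDerivAt (fun s => w x s) (wt x t) t
  chain : ∀ (X : ℝ → ℝ) (X' : ℝ) (s : Set ℝ) (t : ℝ), HasDerivWithinAt X X' s t →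
    HasDerivWithinAt (fun r => w (X r) r) (wx (X t) t * X' + wt (X t) t) s t

lemma Reg.neg {u w wx wt : ℝ → ℝ → ℝ} (h : Reg u w wx wt) :
    Reg (fun x t => - u x t) (fun x t => - w x t) (fun x t => - wx x t) (fun x t => - wt x t) where
  per x t := by rw [h.per]
  wper x t := by rw [h.wper]
  cu := h.cu.neg
  cw := h.cw.neg
  cwx := h.cwx.neg
  cwt := h.cwt.neg
  hux x t := (h.hux x t).neg
  hwx x t := (h.hwx x t).neg
  hwt x t := (h.hwt x t).neg
  chain X X' s t hX := by
    exact (h.chain X X' s t hX).neg.congr_deriv (by ring)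

lemma hasDerivAt_fst_of_hasFDerivAt {f : ℝ × ℝ → ℝ} {f' : ℝ × ℝ →L[ℝ] ℝ} {x t : ℝ}
    (h : HasFDerivAt f f' (x, t)) : HasDerivAt (fun y => f (y, t)) (f' (1, 0)) x :=
  HasFDerivAt.comp_hasDerivAt (f := fun y : ℝ => (y, t)) x h
    ((hasDerivAt_id x).prodMk (hasDerivAt_const x t))

lemma hasDerivAt_snd_of_hasFDerivAt {f : ℝ × ℝ → ℝ} {f' : ℝ × ℝ →L[ℝ] ℝ} {x t : ℝ}
    (h : HasFDerivAt f f' (x, t)) : HasDerivAt (fun s => f (x, s)) (f' (0, 1)) t :=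
  HasFDerivAt.comp_hasDerivAt (f := fun s : ℝ => (x, s)) t h
    ((hasDerivAt_const t x).prodMk (hasDerivAt_id t))

lemma exists_reg {u : ℝ → ℝ → ℝ} (hu : ContDiff ℝ 2 (fun p : ℝ × ℝ => u p.1 p.2))
    (per : ∀ x t, u (x + 1) t = u x t) :
    ∃ w ut wx wt : ℝ → ℝ → ℝ, Reg u w wx wt ∧
      (∀ x t, HasDerivAt (fun s => u x s) (ut x t) t) ∧
      (∀ x t, HasDerivAt (fun y => ut y t) (wt x t) x) := by
  set U : ℝ × ℝ → ℝ := fun p => u p.1 p.2 with hU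
  have hD : ∀ p, HasFDerivAt U (fderiv ℝ U p) p := fun p =>
    (hu.differentiable (by norm_num) p).hasFDerivAt
  have hD1 : ContDiff ℝ 1 (fderiv ℝ U) := hu.fderiv_right (by norm_num)
  have hDD : ∀ p, HasFDerivAt (fderiv ℝ U) (fderiv ℝ (fderiv ℝ U) p) p := fun p =>
    (hD1.differentiable (by norm_num) p).hasFDerivAt
  have hDDc : Continuous (fderiv ℝ (fderiv ℝ U)) := hD1.continuous_fderiv (by norm_num)
  have hev : ∀ (v : ℝ × ℝ) p, HasFDerivAt (fun q => fderiv ℝ U q v)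
      ((fderiv ℝ (fderiv ℝ U) p).flip v) p := by
    intro v p
    have := (hDD p).clm_apply (hasFDerivAt_const v p)
    exact this.congr_fderiv (by ext <;> simp)
  have hux : ∀ x t, HasDerivAt (fun y => u y t) (fderiv ℝ U (x, t) (1, 0)) x := fun x t =>
    hasDerivAt_fst_of_hasFDerivAt (hD (x, t))
  refine ⟨fun x t => fderiv ℝ U (x, t) (1, 0), fun x t => fderiv ℝ U (x, t) (0, 1),
    fun x t => fderiv ℝ (fderiv ℝ U) (x, t) (1, 0) (1, 0),
    fun x t => fderiv ℝ (fderiv ℝ U) (x, t) (0, 1) (1, 0), ?_, ?_, ?_⟩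
  · refine ⟨per, ?_, hu.continuous, ?_, ?_, ?_, hux, ?_, ?_, ?_⟩
    · intro x t
      have h1 := (hux (x + 1) t).comp_add_const x 1
      simp only [per] at h1
      exact h1.unique (hux x t)
    · exact hD1.continuous.clm_apply continuous_const
    · exact (hDDc.clm_apply continuous_const).clm_apply continuous_const
    · exact (hDDc.clm_apply continuous_const).clm_apply continuous_const
    · intro x t
      exact hasDerivAt_fst_of_hasFDerivAt (hev (1, 0) (x, t))
    · intro x t
      exact hasDerivAt_snd_of_hasFDerivAt (hev (1, 0) (x, t))
    · intro X X' s t hX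
      have := (hev (1, 0) (X t, t)).comp_hasDerivWithinAt (f := fun r => (X r, r)) t
        (hX.prodMk (hasDerivWithinAt_id t s))
      refine HasDerivWithinAt.congr_deriv (f := fun r => fderiv ℝ U (X r, r) (1, 0)) this ?_
      have e : ((X', 1) : ℝ × ℝ) = X' • ((1, 0) : ℝ × ℝ) + ((0, 1) : ℝ × ℝ) := by
        ext <;> simp
      rw [e, map_add, map_smul]
      simp [mul_comm]
  · intro x t
    exact hasDerivAt_snd_of_hasFDerivAt (hD (x, t))
  · intro x t
    have h := hasDerivAt_fst_of_hasFDerivAt (hev (0, 1) (x, t))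
    have hs := second_derivative_symmetric hD (hDD (x, t)) (1, 0) (0, 1)
    exact h.congr_deriv hs

lemma deriv_under_integral {f f' : ℝ → ℝ → ℝ} (a b : ℝ)
    (hf : ∀ x, Continuous (f x)) (hf' : Continuous (fun p : ℝ × ℝ => f' p.1 p.2))
    (hd : ∀ x y, HasDerivAt (fun z => f z y) (f' x y) x) (x : ℝ) :
    HasDerivAt (fun z => ∫ y in a..b, f z y) (∫ y in a..b, f' x y) x := by
  obtain ⟨C, hC⟩ := ((isCompact_Icc (a := x - 1) (b := x + 1)).prod
    (isCompact_uIcc (a := a) (b := b))).exists_bound_of_continuousOn hf'.continuousOn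
  have hs : Icc (x - 1) (x + 1) ∈ nhds x := Icc_mem_nhds (by linarith) (by linarith)
  refine (intervalIntegral.hasDerivAt_integral_of_dominated_loc_of_deriv_le
    (F := f) (F' := f') (bound := fun _ => C) hs ?_ ?_ ?_ ?_ ?_ ?_).2
  · exact Filter.Eventually.of_forall fun z => (hf z).aestronglyMeasurable
  · exact (hf x).intervalIntegrable a b
  · have : Continuous (f' x) := hf'.comp (continuous_const.prodMk continuous_id)
    exact this.aestronglyMeasurable
  · refine Filter.Eventually.of_forall fun y hy z hz => ?_
    exact hC (z, y) ⟨hz, uIoc_subset_uIcc hy⟩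
  · exact intervalIntegrable_const
  · exact Filter.Eventually.of_forall fun y _ z _ => hd z y

lemma source_deriv {σ : ℝ → ℝ} (hσ : ContDiff ℝ 1 σ) (hper : ∀ x, σ (x + 1 / 2) = σ x)
    {M : ℝ} (hM : ∀ x, |deriv σ x| ≤ M) {f f' : ℝ → ℝ} (hf : ∀ x, HasDerivAt f (f' x) x)
    (hf' : Continuous f') (fper : ∀ x, f (x + 1) = f x) (fper' : ∀ x, f' (x + 1) = f' x) (x : ℝ) :
    ∃ D : ℝ, HasDerivAt (fun z => ∫ y in (-1 : ℝ)..1, (1 / 2) * deriv σ ((z + y) / 2) * f y) D x ∧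
      |D| ≤ M * ∫ y in (0 : ℝ)..1, |f' y| := by
  have hσd : ∀ x, HasDerivAt σ (deriv σ x) x := fun x =>
    (hσ.differentiable (by norm_num) x).hasDerivAt
  have hσc : Continuous (deriv σ) := hσ.continuous_deriv (by norm_num)
  have hσ0 : Continuous σ := hσ.continuous
  have hfc : Continuous f := continuous_iff_continuousAt.2 fun x => (hf x).continuousAt
  have hd1 : ∀ z y : ℝ, HasDerivAt (fun z => σ ((z + y) / 2)) (1 / 2 * deriv σ ((z + y) / 2)) z := by
    intro z y
    have h1 : HasDerivAt (fun z : ℝ => (z + y) / 2) (1 / 2) z :=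
      ((hasDerivAt_id z).add_const y).div_const 2
    exact ((hσd ((z + y) / 2)).comp z h1).congr_deriv (by ring)
  have hd2 : ∀ z y : ℝ, HasDerivAt (fun y => σ ((z + y) / 2)) (1 / 2 * deriv σ ((z + y) / 2)) y := by
    intro z y
    have h1 : HasDerivAt (fun y : ℝ => (z + y) / 2) (1 / 2) y :=
      ((hasDerivAt_id y).const_add z).div_const 2
    exact ((hσd ((z + y) / 2)).comp y h1).congr_deriv (by ring)
  have key : ∀ z, ∫ y in (-1 : ℝ)..1, (1 / 2) * deriv σ ((z + y) / 2) * f y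
      = ∫ y in (-1 : ℝ)..1, -(σ ((z + y) / 2) * f' y) := by
    intro z
    have c1 : Continuous fun y : ℝ => (1 / 2) * deriv σ ((z + y) / 2) * f y := by fun_prop
    have c2 : Continuous fun y : ℝ => σ ((z + y) / 2) * f' y := by fun_prop
    have h := intervalIntegral.integral_eq_sub_of_hasDerivAt (a := -1) (b := 1)
      (fun y _ => (hd2 z y).mul (hf y)) ((c1.add c2).intervalIntegrable _ _)
    have h2 := intervalIntegral.integral_add (c1.intervalIntegrable (μ := volume) (-1) 1)
      (c2.intervalIntegrable (-1) 1)
    have e1 : f 1 = f (-1) := by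
      have a := fper (-1); have b := fper 0
      norm_num at a b; rw [b, a]
    have e2 : σ ((z + 1) / 2) = σ ((z + -1) / 2) := by
      have a := hper ((z + -1) / 2)
      have b := hper ((z + -1) / 2 + 1 / 2)
      rw [← a, ← b]; congr 1; ring
    have h0 : ((fun y => σ ((z + y) / 2)) * f) 1 - ((fun y => σ ((z + y) / 2)) * f) (-1) = 0 := by
      simp only [Pi.mul_apply, e1, e2, sub_self]
    rw [h0] at h
    rw [intervalIntegral.integral_neg]
    linarith
  refine ⟨∫ y in (-1 : ℝ)..1, -((1 / 2 * deriv σ ((x + y) / 2)) * f' y), ?_, ?_⟩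
  · simp only [key]
    refine deriv_under_integral (f := fun z y => -(σ ((z + y) / 2) * f' y))
      (f' := fun z y => -((1 / 2 * deriv σ ((z + y) / 2)) * f' y)) (-1) 1 ?_ ?_ ?_ x
    · intro z; fun_prop
    · fun_prop
    · intro z y
      exact ((hd1 z y).mul_const (f' y)).neg
  · have c1 : Continuous fun y : ℝ => -((1 / 2 * deriv σ ((x + y) / 2)) * f' y) := by fun_prop
    have hp : ∫ y in (-1 : ℝ)..0, |f' y| = ∫ y in (0 : ℝ)..1, |f' y| := by
      have P : Function.Periodic (fun y => |f' y|) 1 := fun y => by simp only [fper']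
      have := P.intervalIntegral_add_eq (-1) 0
      norm_num at this
      exact this
    have hs := intervalIntegral.integral_add_adjacent_intervals
      (hf'.abs.intervalIntegrable (μ := volume) (-1) 0) (hf'.abs.intervalIntegrable 0 1)
    calc |∫ y in (-1 : ℝ)..1, -((1 / 2 * deriv σ ((x + y) / 2)) * f' y)|
        ≤ ∫ y in (-1 : ℝ)..1, |-((1 / 2 * deriv σ ((x + y) / 2)) * f' y)| :=
          intervalIntegral.abs_integral_le_integral_abs (by norm_num)
      _ ≤ ∫ y in (-1 : ℝ)..1, (M / 2) * |f' y| := by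
          apply intervalIntegral.integral_mono_on (by norm_num) (c1.abs.intervalIntegrable _ _)
            ((by fun_prop : Continuous fun y => (M / 2) * |f' y|).intervalIntegrable _ _)
          intro y _
          rw [abs_neg, abs_mul, abs_mul, abs_of_pos (by norm_num : (0:ℝ) < 1 / 2)]
          have := hM ((x + y) / 2)
          have h3 := abs_nonneg (f' y)
          nlinarith
      _ = M * ∫ y in (0 : ℝ)..1, |f' y| := by
          rw [intervalIntegral.integral_const_mul, ← hs, hp]; ring

lemma energy_hasDerivAt {u w wx wt : ℝ → ℝ → ℝ} (h : Reg u w wx wt) {ε : ℝ} (hε : 0 < ε) (t : ℝ) :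
    HasDerivAt (fun s => ∫ x in (0 : ℝ)..1, √(w x s ^ 2 + ε ^ 2))
      (∫ x in (0 : ℝ)..1, w x t / √(w x t ^ 2 + ε ^ 2) * wt x t) t := by
  have cw := h.cw
  have cwt := h.cwt
  have pos : ∀ x s, 0 < w x s ^ 2 + ε ^ 2 := fun x s => by positivity
  refine deriv_under_integral (f := fun s x => √(w x s ^ 2 + ε ^ 2))
    (f' := fun s x => w x s / √(w x s ^ 2 + ε ^ 2) * wt x s) 0 1 ?_ ?_ ?_ t
  · intro s
    have : Continuous fun x => w x s := cw.comp (continuous_id.prodMk continuous_const)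
    fun_prop
  · have c1 : Continuous fun p : ℝ × ℝ => w p.2 p.1 := cw.comp continuous_swap
    have c2 : Continuous fun p : ℝ × ℝ => wt p.2 p.1 := cwt.comp continuous_swap
    refine (c1.div (by fun_prop) ?_).mul c2
    intro p
    exact (Real.sqrt_pos.2 (pos _ _)).ne'
  · intro s x
    have h1 := (((h.hwt x s).pow 2).add_const (ε ^ 2)).sqrt (pos x s).ne'
    refine h1.congr_deriv ?_
    have := (Real.sqrt_pos.2 (pos x s)).ne'
    simp
    field_simp

lemma energy_bound {u w wx wt : ℝ → ℝ → ℝ} (h : Reg u w wx wt) {ε : ℝ} (hε : 0 < ε) {α C t : ℝ}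
    (hα : 0 < α)
    (hF : ∀ x, |wt x t + α * w x t ^ 2 + α * u x t * wx x t| ≤ C) :
    ∫ x in (0 : ℝ)..1, w x t / √(w x t ^ 2 + ε ^ 2) * wt x t ≤ C + α * ε ^ 2 := by
  have pos : ∀ x, 0 < w x t ^ 2 + ε ^ 2 := fun x => by positivity
  have cu : Continuous fun x => u x t := h.cu.comp (continuous_id.prodMk continuous_const)
  have cw : Continuous fun x => w x t := h.cw.comp (continuous_id.prodMk continuous_const)
  have cwx : Continuous fun x => wx x t := h.cwx.comp (continuous_id.prodMk continuous_const)
  have cwt : Continuous fun x => wt x t := h.cwt.comp (continuous_id.prodMk continuous_const)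
  have cφ : Continuous fun x => √(w x t ^ 2 + ε ^ 2) := by fun_prop
  have cq : Continuous fun x => w x t / √(w x t ^ 2 + ε ^ 2) :=
    cw.div cφ fun x => (Real.sqrt_pos.2 (pos _)).ne'
  have hD : ∀ x, HasDerivAt (fun y => u y t * √(w y t ^ 2 + ε ^ 2))
      (w x t * √(w x t ^ 2 + ε ^ 2) + u x t * (w x t / √(w x t ^ 2 + ε ^ 2) * wx x t)) x := by
    intro x
    have h1 := (((h.hwx x t).pow 2).add_const (ε ^ 2)).sqrt (pos x).ne'
    refine ((h.hux x t).mul h1).congr_deriv ?_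
    have := (Real.sqrt_pos.2 (pos x)).ne'
    simp only [Pi.pow_apply]
    field_simp
    norm_num
    ring
  have cD : Continuous fun x => w x t * √(w x t ^ 2 + ε ^ 2)
      + u x t * (w x t / √(w x t ^ 2 + ε ^ 2) * wx x t) := by fun_prop
  have hI := intervalIntegral.integral_eq_sub_of_hasDerivAt (a := 0) (b := 1)
      (fun y _ => hD y) (cD.intervalIntegrable _ _)
  have e1 := h.per 0 t
  have e2 := h.wper 0 t
  rw [zero_add] at e1 e2
  rw [e1, e2, sub_self] at hI
  have cA : Continuous fun x => w x t / √(w x t ^ 2 + ε ^ 2) * wt x t := by fun_prop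
  have cB : Continuous fun x => α * (w x t * √(w x t ^ 2 + ε ^ 2)
      + u x t * (w x t / √(w x t ^ 2 + ε ^ 2) * wx x t)) := by fun_prop
  have hsum := intervalIntegral.integral_add
    (cA.intervalIntegrable (μ := volume) 0 1) (cB.intervalIntegrable 0 1)
  rw [intervalIntegral.integral_const_mul, hI, mul_zero, add_zero] at hsum
  rw [← hsum]
  have : ∫ x in (0 : ℝ)..1, (C + α * ε ^ 2) = C + α * ε ^ 2 := by simp
  rw [← this]
  refine intervalIntegral.integral_mono_on (by norm_num)
    ((cA.add cB).intervalIntegrable _ _)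
    intervalIntegrable_const ?_
  intro x _
  set φ := √(w x t ^ 2 + ε ^ 2) with hφ
  have φpos : 0 < φ := Real.sqrt_pos.2 (pos x)
  have φsq : φ ^ 2 = w x t ^ 2 + ε ^ 2 := Real.sq_sqrt (pos x).le
  set q := w x t / φ with hq
  have hw : w x t = q * φ := by rw [hq]; field_simp
  have hq1 : |q| ≤ 1 := by
    rw [hq, abs_div, abs_of_pos φpos, div_le_one φpos]
    apply abs_le_of_sq_le_sq' _ φpos.le |> abs_le.2
    nlinarith
  have e : q * wt x t + α * (w x t * φ + u x t * (q * wx x t))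
      = q * (wt x t + α * w x t ^ 2 + α * u x t * wx x t) + α * (q * ε ^ 2) := by
    have : ε ^ 2 = φ ^ 2 - w x t ^ 2 := by linarith
    rw [this, hw]; ring
  rw [e]
  have b1 : q * (wt x t + α * w x t ^ 2 + α * u x t * wx x t) ≤ C := by
    refine (le_abs_self _).trans ?_
    rw [abs_mul]
    have := hF x
    have h3 := abs_nonneg (wt x t + α * w x t ^ 2 + α * u x t * wx x t)
    nlinarith
  have b2 : α * (q * ε ^ 2) ≤ α * ε ^ 2 := by
    have := (abs_le.1 hq1).2
    gcongr
    nlinarith [sq_nonneg ε]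
  linarith

lemma tv_bound {u w wx wt v z zx zt : ℝ → ℝ → ℝ} (hu : Reg u w wx wt) (hv : Reg v z zx zt)
    {α k T : ℝ} (hα : 0 < α) (hk : 0 < k)
    (h1 : ∀ x, ∀ t ∈ Icc 0 T, |wt x t + α * w x t ^ 2 + α * u x t * wx x t|
      ≤ k * ∫ y in (0 : ℝ)..1, |z y t|)
    (h2 : ∀ x, ∀ t ∈ Icc 0 T, |zt x t + α * z x t ^ 2 + α * v x t * zx x t|
      ≤ k * ∫ y in (0 : ℝ)..1, |w y t|) {t : ℝ} (ht : t ∈ Icc 0 T) :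
    (∫ y in (0 : ℝ)..1, |w y t|) + (∫ y in (0 : ℝ)..1, |z y t|) ≤
      Real.exp (k * t) * ((∫ y in (0 : ℝ)..1, |w y 0|) + (∫ y in (0 : ℝ)..1, |z y 0|)) := by
  set MI := (∫ y in (0 : ℝ)..1, |w y 0|) + (∫ y in (0 : ℝ)..1, |z y 0|) with hMI
  have cw : ∀ s, Continuous fun x => w x s := fun s =>
    hu.cw.comp (continuous_id.prodMk continuous_const)
  have cz : ∀ s, Continuous fun x => z x s := fun s =>
    hv.cw.comp (continuous_id.prodMk continuous_const)
  have lower : ∀ (f : ℝ → ℝ) (ε : ℝ), Continuous f →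
      ∫ y in (0 : ℝ)..1, |f y| ≤ ∫ y in (0 : ℝ)..1, √(f y ^ 2 + ε ^ 2) := by
    intro f ε hf
    refine intervalIntegral.integral_mono_on (by norm_num) (hf.abs.intervalIntegrable _ _)
      ((by fun_prop : Continuous fun y => √(f y ^ 2 + ε ^ 2)).intervalIntegrable _ _) ?_
    intro x _
    apply Real.le_sqrt_of_sq_le
    rw [sq_abs]; nlinarith [sq_nonneg ε]
  have upper : ∀ (f : ℝ → ℝ) (ε : ℝ), 0 < ε → Continuous f →
      ∫ y in (0 : ℝ)..1, √(f y ^ 2 + ε ^ 2) ≤ (∫ y in (0 : ℝ)..1, |f y|) + ε := by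
    intro f ε hε hf
    have : ∫ y in (0 : ℝ)..1, (|f y| + ε) = (∫ y in (0 : ℝ)..1, |f y|) + ε := by
      rw [intervalIntegral.integral_add (hf.abs.intervalIntegrable _ _) intervalIntegrable_const]
      simp
    rw [← this]
    refine intervalIntegral.integral_mono_on (by norm_num)
      ((by fun_prop : Continuous fun y => √(f y ^ 2 + ε ^ 2)).intervalIntegrable _ _)
      ((hf.abs.add continuous_const).intervalIntegrable _ _) ?_
    intro x _
    rw [Real.sqrt_le_left (by positivity)]
    nlinarith [sq_abs (f x), abs_nonneg (f x)]
  have main : ∀ ε : ℝ, 0 < ε → (∫ y in (0 : ℝ)..1, |w y t|) + (∫ y in (0 : ℝ)..1, |z y t|) ≤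
      Real.exp (k * t) * (MI + 2 * ε + 2 * α * ε ^ 2 / k) := by
    intro ε hε
    set E : ℝ → ℝ := fun s => (∫ x in (0 : ℝ)..1, √(w x s ^ 2 + ε ^ 2))
      + ∫ x in (0 : ℝ)..1, √(z x s ^ 2 + ε ^ 2) with hE
    set E' : ℝ → ℝ := fun t => (∫ x in (0 : ℝ)..1, w x t / √(w x t ^ 2 + ε ^ 2) * wt x t)
      + ∫ x in (0 : ℝ)..1, z x t / √(z x t ^ 2 + ε ^ 2) * zt x t with hE'
    have dE : ∀ s, HasDerivAt E (E' s) s := fun s =>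
      (energy_hasDerivAt hu hε s).add (energy_hasDerivAt hv hε s)
    have bE : ∀ s ∈ Icc 0 T, E' s ≤ k * E s + 2 * α * ε ^ 2 := by
      intro s hs
      have a1 := energy_bound hu hε hα (fun x => h1 x s hs)
      have a2 := energy_bound hv hε hα (fun x => h2 x s hs)
      have a3 := mul_le_mul_of_nonneg_left (lower (fun x => w x s) ε (cw s)) hk.le
      have a4 := mul_le_mul_of_nonneg_left (lower (fun x => z x s) ε (cz s)) hk.le
      simp only [hE, hE', mul_add]
      linarith
    have dH : ∀ s, HasDerivAt (fun s => Real.exp (-(k * s)) * (E s + 2 * α * ε ^ 2 / k))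
        (Real.exp (-(k * s)) * (E' s - k * E s - 2 * α * ε ^ 2)) s := by
      intro s
      have e1 : HasDerivAt (fun s => Real.exp (-(k * s))) (Real.exp (-(k * s)) * (-(k * 1))) s :=
        (((hasDerivAt_id s).const_mul k).neg).exp
      refine (e1.mul ((dE s).add_const _)).congr_deriv ?_
      field_simp
      ring
    have anti : AntitoneOn (fun s => Real.exp (-(k * s)) * (E s + 2 * α * ε ^ 2 / k)) (Icc 0 T) := by
      refine antitoneOn_of_hasDerivWithinAt_nonpos (convex_Icc 0 T)
        (fun s _ => (dH s).continuousAt.continuousWithinAt)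
        (fun s _ => (dH s).hasDerivWithinAt) ?_
      intro s hs
      have := bE s (interior_subset hs)
      exact mul_nonpos_of_nonneg_of_nonpos (Real.exp_pos _).le (by linarith)
    have h0 := anti (⟨le_rfl, ht.1.trans ht.2⟩ : (0:ℝ) ∈ Icc 0 T) ht ht.1
    simp only [mul_zero, neg_zero, Real.exp_zero, one_mul] at h0
    have hE0 : E 0 ≤ MI + 2 * ε := by
      have a1 := upper (fun x => w x 0) ε hε (cw 0)
      have a2 := upper (fun x => z x 0) ε hε (cz 0)
      simp only [hE, hMI]; linarith
    have hEt : (∫ y in (0 : ℝ)..1, |w y t|) + (∫ y in (0 : ℝ)..1, |z y t|) ≤ E t := by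
      have a1 := lower (fun x => w x t) ε (cw t)
      have a2 := lower (fun x => z x t) ε (cz t)
      simp only [hE]; linarith
    rw [Real.exp_neg, inv_mul_le_iff₀ (Real.exp_pos _)] at h0
    have p : 0 < 2 * α * ε ^ 2 / k := by positivity
    have h5 : Real.exp (k * t) * (E 0 + 2 * α * ε ^ 2 / k) ≤
      Real.exp (k * t) * (MI + 2 * ε + 2 * α * ε ^ 2 / k) := by gcongr
    linarith
  have lim : Filter.Tendsto (fun ε : ℝ => Real.exp (k * t) * (MI + 2 * ε + 2 * α * ε ^ 2 / k))
      (nhdsWithin 0 (Ioi 0)) (nhds (Real.exp (k * t) * MI)) := by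
    have c : Continuous (fun ε : ℝ => Real.exp (k * t) * (MI + 2 * ε + 2 * α * ε ^ 2 / k)) := by
      fun_prop
    have := (c.tendsto 0).mono_left (nhdsWithin_le_nhds (s := Ioi 0))
    simpa using this
  refine ge_of_tendsto lim ?_
  filter_upwards [self_mem_nhdsWithin] with ε hε
  exact main ε hε

lemma periodic_bound {f : ℝ → ℝ → ℝ} (hf : Continuous (fun p : ℝ × ℝ => f p.1 p.2))
    (per : ∀ x t, f (x + 1) t = f x t) (T : ℝ) :
    ∃ C : NNReal, ∀ x, ∀ t ∈ Icc 0 T, |f x t| ≤ C := by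
  obtain ⟨C, hC⟩ := ((isCompact_Icc (a := (0 : ℝ)) (b := 1)).prod
    (isCompact_Icc (a := (0 : ℝ)) (b := T))).exists_bound_of_continuousOn hf.continuousOn
  refine ⟨C.toNNReal, fun x t ht => ?_⟩
  have P : Function.Periodic (fun x => f x t) 1 := fun x => per x t
  obtain ⟨y, hy, e⟩ := P.exists_mem_Ico₀ one_pos x
  have := hC (y, t) ⟨⟨hy.1, hy.2.le⟩, ht⟩
  rw [show f x t = f y t from e]
  exact this.trans (Real.le_coe_toNNReal C)

lemma exists_char {u w wx wt : ℝ → ℝ → ℝ} (h : Reg u w wx wt) {α T : ℝ} (hα : 0 < α)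
    (hT : 0 ≤ T) (x₀ : ℝ) :
    ∃ X : ℝ → ℝ, X 0 = x₀ ∧
      ∀ t ∈ Icc 0 T, HasDerivWithinAt X (α * u (X t) t) (Icc 0 T) t := by
  obtain ⟨L, hL⟩ := periodic_bound h.cu h.per T
  obtain ⟨K, hK⟩ := periodic_bound h.cw h.wper T
  set a : NNReal := α.toNNReal with ha
  have haα : (a : ℝ) = α := Real.coe_toNNReal α hα.le
  have PL : IsPicardLindelof (fun t x => α * u x t) (tmin := 0) (tmax := T) ⟨0, le_rfl, hT⟩ x₀
      (a * L * T.toNNReal) 0 (a * L) (a * K) := by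
    refine ⟨?_, ?_, ?_, ?_⟩
    · intro t ht
      have : LipschitzWith (a * K) (fun x => α * u x t) := by
        refine lipschitzWith_of_nnnorm_deriv_le
          (fun x => ((h.hux x t).const_mul α).differentiableAt) ?_
        intro x
        rw [((h.hux x t).const_mul α).deriv, ← NNReal.coe_le_coe]
        simp only [coe_nnnorm, NNReal.coe_mul, Real.norm_eq_abs, abs_mul, abs_of_pos hα, haα]
        exact mul_le_mul_of_nonneg_left (hK x t ht) hα.le
      exact this.lipschitzOnWith
    · intro x _
      exact (continuous_const.mul (h.cu.comp (continuous_const.prodMk continuous_id))).continuousOn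
    · intro t ht x _
      simp only [NNReal.coe_mul, Real.norm_eq_abs, abs_mul, abs_of_pos hα, haα]
      exact mul_le_mul_of_nonneg_left (hL x t ht) hα.le
    · simp [hT]
  exact PL.exists_eq_forall_mem_Icc_hasDerivWithinAt₀

lemma exists_neg_slope {f f' : ℝ → ℝ} (hf : ∀ x, HasDerivAt f (f' x) x) (hf' : Continuous f')
    (per : f 1 = f 0) {M : ℝ} (hM : 0 < M) (hI : M / 2 ≤ ∫ y in (0 : ℝ)..1, |f' y|) :
    ∃ x, f' x ≤ -M / 4 := by
  by_contra hcon
  push Not at hcon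
  have h0 := intervalIntegral.integral_eq_sub_of_hasDerivAt (a := 0) (b := 1)
      (fun y _ => hf y) (hf'.intervalIntegrable _ _)
  rw [per, sub_self] at h0
  have hlt : ∀ x, |f' x| < f' x + M / 2 := by
    intro x
    have := hcon x
    rw [abs_lt]
    constructor <;> linarith
  have : ∫ y in (0 : ℝ)..1, |f' y| < ∫ y in (0 : ℝ)..1, (f' y + M / 2) :=
    intervalIntegral.integral_lt_integral_of_continuousOn_of_le_of_exists_lt one_pos
      hf'.abs.continuousOn (hf'.add continuous_const).continuousOn (fun x _ => (hlt x).le)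
      ⟨0, ⟨le_rfl, zero_le_one⟩, hlt 0⟩
  rw [intervalIntegral.integral_add (hf'.intervalIntegrable _ _) intervalIntegrable_const, h0] at this
  simp at this
  linarith

lemma core {u w wx wt v z zx zt : ℝ → ℝ → ℝ} (hu : Reg u w wx wt) (hv : Reg v z zx zt)
    {α k T MI : ℝ} (hα : 0 < α) (hk : 0 < k) (hMI : 0 < MI) (hT : T = 6 / (α * MI))
    (hkT : k * T < Real.log (13 / 12))
    (h1 : ∀ x, ∀ t ∈ Icc 0 T, |wt x t + α * w x t ^ 2 + α * u x t * wx x t|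
      ≤ k * ∫ y in (0 : ℝ)..1, |z y t|)
    (h2 : ∀ x, ∀ t ∈ Icc 0 T, |zt x t + α * z x t ^ 2 + α * v x t * zx x t|
      ≤ k * ∫ y in (0 : ℝ)..1, |w y t|)
    (hM : (∫ y in (0 : ℝ)..1, |w y 0|) + (∫ y in (0 : ℝ)..1, |z y 0|) = MI)
    (hge : MI / 2 ≤ ∫ y in (0 : ℝ)..1, |w y 0|) : False := by
  have hTpos : 0 < T := by rw [hT]; positivity
  have cw0 : Continuous fun x => w x 0 := hu.cw.comp (continuous_id.prodMk continuous_const)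
  obtain ⟨x₀, hx₀⟩ := exists_neg_slope (fun x => hu.hux x 0) cw0
    (by have := hu.per 0 0; rwa [zero_add] at this) hMI hge
  obtain ⟨X, hX0, hX⟩ := exists_char hu hα hTpos.le x₀
  set Q : ℝ → ℝ := fun t => w (X t) t - MI * (Real.exp (k * t) - 1) + MI / 12 with hQ
  set Q' : ℝ → ℝ := fun t => wx (X t) t * (α * u (X t) t) + wt (X t) t
    - MI * (Real.exp (k * t) * (k * 1)) with hQ'
  have dQ : ∀ t ∈ Icc 0 T, HasDerivWithinAt Q (Q' t) (Icc 0 T) t := by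
    intro t ht
    have a1 := hu.chain X _ _ t (hX t ht)
    have a2 : HasDerivWithinAt (fun t => MI * (Real.exp (k * t) - 1))
        (MI * (Real.exp (k * t) * (k * 1))) (Icc 0 T) t :=
      ((((hasDerivAt_id t).const_mul k).exp.sub_const 1).const_mul MI).hasDerivWithinAt
    exact (a1.sub a2).add_const _
  have bQ : ∀ t ∈ Icc 0 T, Q' t ≤ -α * w (X t) t ^ 2 := by
    intro t ht
    have a1 := (abs_le.1 (h1 (X t) t ht)).2
    have a2 := tv_bound hu hv hα hk h1 h2 ht
    rw [hM] at a2
    have a3 : 0 ≤ ∫ y in (0 : ℝ)..1, |w y t| :=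
      intervalIntegral.integral_nonneg (by norm_num) fun _ _ => abs_nonneg _
    have a4 : k * ∫ y in (0 : ℝ)..1, |z y t| ≤ k * (Real.exp (k * t) * MI) :=
      mul_le_mul_of_nonneg_left (by linarith) hk.le
    simp only [hQ']
    nlinarith
  have cQ : ContinuousOn Q (Icc 0 T) := fun t ht => (dQ t ht).continuousWithinAt
  have antiQ : AntitoneOn Q (Icc 0 T) := by
    refine antitoneOn_of_hasDerivWithinAt_nonpos (convex_Icc 0 T) cQ
      (fun s hs => (dQ s (interior_subset hs)).mono interior_subset) ?_
    intro s hs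
    have := bQ s (interior_subset hs)
    nlinarith [sq_nonneg (w (X s) s)]
  have hQ0 : Q 0 ≤ -(MI / 6) := by
    simp only [hQ, hX0, mul_zero, Real.exp_zero]
    linarith
  have m0 : (0 : ℝ) ∈ Icc 0 T := ⟨le_rfl, hTpos.le⟩
  have mT : T ∈ Icc 0 T := ⟨hTpos.le, le_rfl⟩
  have Qneg : ∀ t ∈ Icc 0 T, Q t < 0 := by
    intro t ht
    have := antiQ m0 ht ht.1
    linarith
  have wQ : ∀ t ∈ Icc 0 T, w (X t) t ≤ Q t := by
    intro t ht
    have e : Real.exp (k * t) ≤ 13 / 12 := by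
      rw [← Real.le_log_iff_exp_le (by norm_num)]
      have := mul_le_mul_of_nonneg_left ht.2 hk.le
      linarith
    simp only [hQ]
    nlinarith
  -- the function `α t - 1/Q` is nonincreasing
  have dR : ∀ t ∈ Icc 0 T, HasDerivWithinAt (fun t => α * t - (Q t)⁻¹)
      (α * 1 - -(Q' t) / Q t ^ 2) (Icc 0 T) t := by
    intro t ht
    exact ((hasDerivAt_id t).const_mul α).hasDerivWithinAt.sub ((dQ t ht).inv (Qneg t ht).ne)
  have antiR : AntitoneOn (fun t => α * t - (Q t)⁻¹) (Icc 0 T) := by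
    refine antitoneOn_of_hasDerivWithinAt_nonpos (convex_Icc 0 T)
      (fun t ht => (dR t ht).continuousWithinAt)
      (fun s hs => (dR s (interior_subset hs)).mono interior_subset) ?_
    intro s hs
    have hs' := interior_subset hs
    have b := bQ s hs'
    have n := Qneg s hs'
    have wq := wQ s hs'
    have p : 0 < Q s ^ 2 := by nlinarith
    have sq : Q s ^ 2 ≤ w (X s) s ^ 2 := by nlinarith
    have : α ≤ -(Q' s) / Q s ^ 2 := by
      rw [le_div_iff₀ p]
      nlinarith
    linarith
  have fin := antiR m0 mT hTpos.le
  simp only [mul_zero, zero_sub] at fin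
  have f1 : (Q T)⁻¹ < 0 := inv_lt_zero.2 (Qneg T mT)
  have f2 : -(Q 0)⁻¹ ≤ 6 / MI := by
    rw [← inv_neg, inv_le_comm₀ (by linarith) (by positivity), inv_div]
    linarith
  have f3 : α * T = 6 / MI := by rw [hT]; field_simp
  linarith

/-- finite-time blow-up of classical solutions.  If the initial
sound waves are strong enough relative to the entropy wave,
`M_I / M̃_E > (3/ln(13/12)) (β/α)`, then no `C²`, `x`-periodic classical
solution exists on `ℝ × [0,T]` for any `T > 6/(α M_I)`. -/
theorem classical_solution_blowup
    (α β : ℝ) (hα : 0 < α) (hβ : 0 < β)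
    (σ₂ : ℝ → ℝ) (hσ₂C1 : ContDiff ℝ 1 σ₂)
    (hσ₂per : ∀ x, σ₂ (x + 1 / 2) = σ₂ x)
    (ME : ℝ) (hME : IsGreatest ((fun x => |deriv σ₂ x|) '' Set.Icc 0 (1 / 2)) ME)
    (σ₁₀ σ₃₀ : ℝ → ℝ)
    (h₁₀C1 : ContDiff ℝ 1 σ₁₀) (h₃₀C1 : ContDiff ℝ 1 σ₃₀)
    (hper₁ : ∀ x, σ₁₀ (x + 1) = σ₁₀ x) (hper₃ : ∀ x, σ₃₀ (x + 1) = σ₃₀ x)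
    (hmean₁ : ∫ x in (0 : ℝ)..1, σ₁₀ x = 0)
    (hmean₃ : ∫ x in (0 : ℝ)..1, σ₃₀ x = 0)
    (MI : ℝ)
    (hMI : MI = (∫ x in (0 : ℝ)..1, |deriv σ₁₀ x|)
        + ∫ x in (0 : ℝ)..1, |deriv σ₃₀ x|)
    (hcond : MI / ME > (3 / Real.log (13 / 12)) * (β / α)) :
    ∀ T : ℝ, 6 / (α * MI) < T →
      ¬ ∃ σ₁ σ₃ : ℝ → ℝ → ℝ,
          ContDiff ℝ 2 (fun p : ℝ × ℝ => σ₁ p.1 p.2) ∧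
          ContDiff ℝ 2 (fun p : ℝ × ℝ => σ₃ p.1 p.2) ∧
          IsClassicalSolution α β σ₂ T σ₁ σ₃ ∧
          (∀ x, σ₁ x 0 = σ₁₀ x) ∧ (∀ x, σ₃ x 0 = σ₃₀ x) := by
  intro T hT
  rintro ⟨σ₁, σ₃, hC1, hC3, ⟨hp1, hp3, heq⟩, hi1, hi3⟩
  have hlog : 0 < Real.log (13 / 12) := Real.log_pos (by norm_num)
  -- positivity of the constants
  have hMI0 : 0 ≤ MI := by
    rw [hMI]
    exact add_nonneg (intervalIntegral.integral_nonneg (by norm_num) fun _ _ => abs_nonneg _)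
      (intervalIntegral.integral_nonneg (by norm_num) fun _ _ => abs_nonneg _)
  have hME0 : 0 ≤ ME := by
    obtain ⟨x, _, hx⟩ := hME.1
    rw [← hx]; exact abs_nonneg _
  have hquot : 0 < MI / ME := lt_trans (by positivity) hcond
  have hMEpos : 0 < ME := by
    rcases hME0.eq_or_lt with h | h
    · rw [← h, div_zero] at hquot; exact absurd hquot (lt_irrefl _)
    · exact h
  have hMIpos : 0 < MI := by
    rcases hMI0.eq_or_lt with h | h
    · rw [← h, zero_div] at hquot; exact absurd hquot (lt_irrefl _)
    · exact h
  have hkT : β * ME / 2 * (6 / (α * MI)) < Real.log (13 / 12) := by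
    rw [gt_iff_lt, lt_div_iff₀ hMEpos] at hcond
    have e : 3 / Real.log (13 / 12) * (β / α) * ME = 3 * β * ME / (Real.log (13 / 12) * α) := by
      field_simp
    rw [e, div_lt_iff₀ (by positivity)] at hcond
    rw [show β * ME / 2 * (6 / (α * MI)) = 3 * β * ME / (α * MI) by field_simp; ring,
      div_lt_iff₀ (by positivity)]
    linarith
  have hTpos : 0 < T := lt_trans (by positivity) hT
  -- global bound on the derivative of the entropy profile
  have hM : ∀ x, |deriv σ₂ x| ≤ ME := by
    have P : Function.Periodic (deriv σ₂) (1 / 2) := by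
      intro x
      have : (fun y => σ₂ (y + 1 / 2)) = σ₂ := funext hσ₂per
      rw [← deriv_comp_add_const, this]
    intro x
    obtain ⟨y, hy, e⟩ := P.exists_mem_Ico₀ (by norm_num) x
    rw [e]
    exact hME.2 ⟨y, ⟨hy.1, hy.2.le⟩, rfl⟩
  obtain ⟨w, ut, wx, wt, hu, hut, hutx⟩ := exists_reg hC1 hp1
  obtain ⟨z, vt, zx, zt, hv, hvt, hvtx⟩ := exists_reg hC3 hp3
  have cw : ∀ t, Continuous fun x => w x t := fun t =>
    hu.cw.comp (continuous_id.prodMk continuous_const)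
  have cz : ∀ t, Continuous fun x => z x t := fun t =>
    hv.cw.comp (continuous_id.prodMk continuous_const)
  have hsq1 : ∀ x t, deriv (fun y => (σ₁ y t) ^ 2) x = 2 * σ₁ x t * w x t := by
    intro x t
    exact (((hu.hux x t).pow 2).congr_deriv (by simp)).deriv
  have hsq3 : ∀ x t, deriv (fun y => (σ₃ y t) ^ 2) x = 2 * σ₃ x t * z x t := by
    intro x t
    exact (((hv.hux x t).pow 2).congr_deriv (by simp)).deriv
  -- the differentiated equations
  have b1 : ∀ x, ∀ t ∈ Icc 0 T, |wt x t + α * w x t ^ 2 + α * σ₁ x t * wx x t|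
      ≤ β * ME / 2 * ∫ y in (0 : ℝ)..1, |z y t| := by
    intro x t ht
    obtain ⟨D, hD, hDb⟩ := source_deriv hσ₂C1 hσ₂per hM (fun x => hv.hux x t) (cz t)
      (fun x => hp3 x t) (fun x => hv.wper x t) x
    have hfun : (fun y => ut y t) = fun y => -(α * (σ₁ y t * w y t))
        - β / 2 * ∫ r in (-1 : ℝ)..1, (1 / 2) * deriv σ₂ ((y + r) / 2) * σ₃ r t := by
      funext y
      have h := (heq y t ht).1
      rw [(hut y t).hasDerivWithinAt.derivWithin (uniqueDiffOn_Icc hTpos t ht), hsq1] at h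
      linarith
    have hd := hutx x t
    rw [hfun] at hd
    have hd' := ((((hu.hux x t).mul (hu.hwx x t)).const_mul α).neg).sub (hD.const_mul (β / 2))
    have e := hd.unique hd'
    have e2 : wt x t + α * w x t ^ 2 + α * σ₁ x t * wx x t = -(β / 2 * D) := by
      rw [e]; ring
    rw [e2, abs_neg, abs_mul, abs_of_pos (by positivity : 0 < β / 2)]
    calc β / 2 * |D| ≤ β / 2 * (ME * ∫ y in (0 : ℝ)..1, |z y t|) := by gcongr
      _ = _ := by ring
  have b3 : ∀ x, ∀ t ∈ Icc 0 T, |-zt x t + α * (-z x t) ^ 2 + α * (-σ₃ x t) * (-zx x t)|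
      ≤ β * ME / 2 * ∫ y in (0 : ℝ)..1, |w y t| := by
    intro x t ht
    obtain ⟨D, hD, hDb⟩ := source_deriv hσ₂C1 hσ₂per hM (fun x => hu.hux x t) (cw t)
      (fun x => hp1 x t) (fun x => hu.wper x t) x
    have hfun : (fun y => vt y t) = fun y => α * (σ₃ y t * z y t)
        + β / 2 * ∫ r in (-1 : ℝ)..1, (1 / 2) * deriv σ₂ ((y + r) / 2) * σ₁ r t := by
      funext y
      have h := (heq y t ht).2
      rw [(hvt y t).hasDerivWithinAt.derivWithin (uniqueDiffOn_Icc hTpos t ht), hsq3] at h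
      linarith
    have hd := hvtx x t
    rw [hfun] at hd
    have hd' := (((hv.hux x t).mul (hv.hwx x t)).const_mul α).add (hD.const_mul (β / 2))
    have e := hd.unique hd'
    have e2 : -zt x t + α * (-z x t) ^ 2 + α * (-σ₃ x t) * (-zx x t) = -(β / 2 * D) := by
      rw [e]; ring
    rw [e2, abs_neg, abs_mul, abs_of_pos (by positivity : 0 < β / 2)]
    calc β / 2 * |D| ≤ β / 2 * (ME * ∫ y in (0 : ℝ)..1, |w y t|) := by gcongr
      _ = _ := by ring
  -- initial data
  have i1 : ∀ x, deriv σ₁₀ x = w x 0 := by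
    intro x
    have : (fun y => σ₁ y 0) = σ₁₀ := funext hi1
    rw [← this]; exact (hu.hux x 0).deriv
  have i3 : ∀ x, deriv σ₃₀ x = z x 0 := by
    intro x
    have : (fun y => σ₃ y 0) = σ₃₀ := funext hi3
    rw [← this]; exact (hv.hux x 0).deriv
  simp only [i1, i3] at hMI
  have sub : ∀ t ∈ Icc 0 (6 / (α * MI)), t ∈ Icc 0 T := fun t ht => ⟨ht.1, ht.2.trans hT.le⟩
  have hk : 0 < β * ME / 2 := by positivity
  rcases le_total (∫ y in (0 : ℝ)..1, |z y 0|) (∫ y in (0 : ℝ)..1, |w y 0|) with hle | hle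
  · refine core hu hv.neg hα hk hMIpos rfl hkT ?_ ?_ ?_ ?_
    · intro x t ht; simp only [abs_neg]; exact b1 x t (sub t ht)
    · intro x t ht; exact b3 x t (sub t ht)
    · simp only [abs_neg]; exact hMI.symm
    · linarith
  · refine core hv.neg hu hα hk hMIpos rfl hkT ?_ ?_ ?_ ?_
    · intro x t ht; exact b3 x t (sub t ht)
    · intro x t ht; simp only [abs_neg]; exact b1 x t (sub t ht)
    · simp only [abs_neg]; linarith
    · simp only [abs_neg]; linarith
end

section
/- Assume σ₂ : ℝ → ℝ is C¹ with σ₂(x + 1/2) = σ₂(x) for all x, and set M̃_E := max_{x ∈ [0,1/2]} |σ₂'(x)|. Let (σ₁, σ₃) be a classical solution of the system of weakly nonlinear gas dynamics on ℝ × [0,T], 1-periodic in x, with σ₁, σ₃ of class C². Then for every t ∈ [0,T]: ∫₀¹ |∂_x σ₁(x,t)| dx + ∫₀¹ |∂_x σ₃(x,t)| dx ≤ ( ∫₀¹ |∂_x σ₁(x,0)| dx + ∫₀¹ |∂_x σ₃(x,0)| dx ) · exp( (β/2) M̃_E t ). -/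
open MeasureTheory Set

lemma aux_slice_x {g : ℝ × ℝ → ℝ} (hg : Differentiable ℝ g) (x t : ℝ) :
    HasDerivAt (fun y => g (y, t)) (fderiv ℝ g (x, t) (1, 0)) x := by
  have h1 : HasDerivAt (fun y : ℝ => ((y, t) : ℝ × ℝ)) (1, 0) x :=
    (hasDerivAt_id x).prodMk (hasDerivAt_const x t)
  exact (hg (x, t)).hasFDerivAt.comp_hasDerivAt x h1

lemma aux_slice_t {g : ℝ × ℝ → ℝ} (hg : Differentiable ℝ g) (x t : ℝ) :
    HasDerivAt (fun s => g (x, s)) (fderiv ℝ g (x, t) (0, 1)) t := by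
  have h1 : HasDerivAt (fun s : ℝ => ((x, s) : ℝ × ℝ)) (0, 1) t :=
    (hasDerivAt_const t x).prodMk (hasDerivAt_id t)
  exact (hg (x, t)).hasFDerivAt.comp_hasDerivAt t h1

lemma aux_c2_data (w : ℝ → ℝ → ℝ) (h : ContDiff ℝ 2 (fun p : ℝ × ℝ => w p.1 p.2)) :
    ∃ u q ux ut : ℝ → ℝ → ℝ,
      (∀ x t, HasDerivAt (fun y => w y t) (u x t) x) ∧
      (∀ x t, HasDerivAt (fun s => w x s) (q x t) t) ∧
      (∀ x t, HasDerivAt (fun y => u y t) (ux x t) x) ∧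
      (∀ x t, HasDerivAt (fun s => u x s) (ut x t) t) ∧
      (∀ x t, HasDerivAt (fun y => q y t) (ut x t) x) ∧
      Continuous (fun p : ℝ × ℝ => u p.1 p.2) ∧
      Continuous (fun p : ℝ × ℝ => ux p.1 p.2) ∧
      Continuous (fun p : ℝ × ℝ => ut p.1 p.2) := by
  set W : ℝ × ℝ → ℝ := fun p => w p.1 p.2 with hW
  have hd : ContDiff ℝ 1 (fderiv ℝ W) := h.fderiv_right (by norm_num)
  have hU : ContDiff ℝ 1 (fun p => fderiv ℝ W p (1, 0)) := hd.clm_apply contDiff_const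
  have hQ : ContDiff ℝ 1 (fun p => fderiv ℝ W p (0, 1)) := hd.clm_apply contDiff_const
  have hWd : Differentiable ℝ W := h.differentiable (by norm_num)
  have hUd := hU.differentiable (by norm_num)
  have hQd := hQ.differentiable (by norm_num)
  refine ⟨fun x t => fderiv ℝ W (x, t) (1, 0), fun x t => fderiv ℝ W (x, t) (0, 1),
    fun x t => fderiv ℝ (fun p => fderiv ℝ W p (1, 0)) (x, t) (1, 0),
    fun x t => fderiv ℝ (fun p => fderiv ℝ W p (1, 0)) (x, t) (0, 1),
    fun x t => aux_slice_x hWd x t, fun x t => aux_slice_t hWd x t,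
    fun x t => aux_slice_x hUd x t, fun x t => aux_slice_t hUd x t, ?_, ?_, ?_, ?_⟩
  · intro x t
    have key := aux_slice_x hQd x t
    have hs : IsSymmSndFDerivAt ℝ W (x, t) :=
      h.contDiffAt.isSymmSndFDerivAt (by simp)
    have e : ∀ v v' : ℝ × ℝ, fderiv ℝ (fun p => fderiv ℝ W p v) (x, t) v'
        = fderiv ℝ (fderiv ℝ W) (x, t) v' v := by
      intro v v'
      have := ((hd.differentiable (by norm_num) (x, t)).hasFDerivAt.clm_apply
        (hasFDerivAt_const v (x, t))).fderiv
      rw [this]; simp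
    have e2 : fderiv ℝ (fun p => fderiv ℝ W p (1, 0)) (x, t) (0, 1)
        = fderiv ℝ (fun p => fderiv ℝ W p (0, 1)) (x, t) (1, 0) := by
      rw [e, e]; exact hs.eq _ _
    rw [← e2] at key; exact key
  · exact hU.continuous
  · exact ((hU.continuous_fderiv (by norm_num)).clm_apply continuous_const)
  · exact ((hU.continuous_fderiv (by norm_num)).clm_apply continuous_const)

lemma aux_param (f f' : ℝ → ℝ → ℝ) (a b : ℝ)
    (hf : ∀ x z, HasDerivAt (fun x => f x z) (f' x z) x)
    (hc : ∀ x, Continuous (f x)) (hc' : Continuous (fun p : ℝ × ℝ => f' p.1 p.2)) (x : ℝ) :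
    HasDerivAt (fun x => ∫ z in a..b, f x z) (∫ z in a..b, f' x z) x := by
  obtain ⟨C, hC⟩ := (isCompact_Icc (a := x - 1) (b := x + 1)).prod
    (isCompact_uIcc (a := a) (b := b)) |>.exists_bound_of_continuousOn hc'.continuousOn
  have hc1 : Continuous (f' x) := hc'.comp (continuous_const.prodMk continuous_id)
  refine (intervalIntegral.hasDerivAt_integral_of_dominated_loc_of_deriv_le
    (bound := fun _ => C) (s := Icc (x - 1) (x + 1))
    (Icc_mem_nhds (by linarith) (by linarith)) ?_ ((hc x).intervalIntegrable _ _)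
    hc1.aestronglyMeasurable ?_ (by simp) ?_).2
  · exact Filter.Eventually.of_forall fun y => (hc y).aestronglyMeasurable
  · exact Filter.Eventually.of_forall fun z hz y hy => hC (y, z) ⟨hy, uIoc_subset_uIcc hz⟩
  · exact Filter.Eventually.of_forall fun z hz y hy => hf y z

/-- The smoothed absolute value. -/
noncomputable def auxPhi (ε s : ℝ) : ℝ := Real.sqrt (s ^ 2 + ε ^ 2)

lemma auxPhi_pos {ε : ℝ} (hε : 0 < ε) (s : ℝ) : 0 < auxPhi ε s :=
  Real.sqrt_pos.2 (by positivity)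

lemma auxPhi_sq (ε s : ℝ) : auxPhi ε s ^ 2 = s ^ 2 + ε ^ 2 :=
  Real.sq_sqrt (by positivity)

lemma abs_le_auxPhi (ε s : ℝ) : |s| ≤ auxPhi ε s :=
  Real.abs_le_sqrt (by nlinarith [sq_nonneg ε])

lemma auxPhi_le {ε : ℝ} (hε : 0 < ε) (s : ℝ) : auxPhi ε s ≤ |s| + ε := by
  apply Real.sqrt_le_iff.2
  refine ⟨by positivity, ?_⟩
  nlinarith [sq_abs s, abs_nonneg s]

lemma auxPhi_hasDerivAt {ε : ℝ} (hε : 0 < ε) (s : ℝ) :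
    HasDerivAt (auxPhi ε) (s / auxPhi ε s) s := by
  have h1 : HasDerivAt (fun s : ℝ => s ^ 2 + ε ^ 2) (2 * s) s := by
    simpa using ((hasDerivAt_id s).pow 2).add_const (ε ^ 2)
  have h2 := h1.sqrt (by positivity)
  have h3 := auxPhi_pos hε s
  have h4 : s / auxPhi ε s = 2 * s / (2 * auxPhi ε s) := by field_simp
  rw [h4]
  exact h2

lemma auxPhi_continuous (ε : ℝ) : Continuous (auxPhi ε) := by
  unfold auxPhi; fun_prop

/-- Kernel term: differentiability and bound. -/
lemma aux_kernel (k r v : ℝ → ℝ) (hk : Continuous k) (hkp : ∀ x, k (x + 1 / 2) = k x)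
    (M : ℝ) (hM : ∀ x, |k x| ≤ M) (hr : ∀ x, HasDerivAt r (v x) x) (hv : Continuous v)
    (hrp : ∀ x, r (x + 1) = r x) (hvp : ∀ x, v (x + 1) = v x) (x : ℝ) :
    ∃ d, HasDerivAt (fun x => ∫ y in (-1 : ℝ)..1, (1 / 2) * k ((x + y) / 2) * r y) d x ∧
      |d| ≤ M * ∫ y in (0 : ℝ)..1, |v y| := by
  have hrc : Continuous r := continuous_iff_continuousAt.2 fun x => (hr x).continuousAt
  have hrp2 : ∀ x, r (x + 2) = r x := fun x => by
    rw [show x + 2 = x + 1 + 1 by ring, hrp, hrp]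
  have e : ∀ x, (∫ y in (-1 : ℝ)..1, (1 / 2) * k ((x + y) / 2) * r y)
      = ∫ z in (-1 : ℝ)..1, (1 / 2) * k (z / 2) * r (z - x) := by
    intro x
    have h1 := intervalIntegral.integral_comp_add_right (a := -1) (b := 1)
      (fun z => (1 / 2) * k (z / 2) * r (z - x)) x
    have h2 : Function.Periodic (fun z => (1 / 2) * k (z / 2) * r (z - x)) 2 := by
      intro z
      have : k ((z + 2) / 2) = k (z / 2) := by
        rw [show (z + 2) / 2 = z / 2 + 1 / 2 + 1 / 2 by ring, hkp, hkp]
      simp only [this]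
      rw [show z + 2 - x = z - x + 2 by ring, hrp2]
    have h3 := h2.intervalIntegral_add_eq (-1 + x) (-1)
    rw [show (-1 + x + 2 : ℝ) = 1 + x by ring, show (-1 + 2 : ℝ) = 1 by norm_num] at h3
    rw [← h3, ← h1]
    refine intervalIntegral.integral_congr fun y _ => ?_
    simp only [add_sub_cancel_right, add_comm x y]
  refine ⟨∫ z in (-1 : ℝ)..1, (1 / 2) * k (z / 2) * (- v (z - x)), ?_, ?_⟩
  · simp only [e]
    refine aux_param (fun x z => (1 / 2) * k (z / 2) * r (z - x))
      (fun x z => (1 / 2) * k (z / 2) * (- v (z - x))) _ _ ?_ ?_ ?_ x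
    · intro x z
      have h1 : HasDerivAt (fun x => z - x) (-1) x := by
        simpa using (hasDerivAt_id x).const_sub z
      have h2 := ((hr (z - x)).comp x h1).const_mul ((1 / 2) * k (z / 2))
      simpa using h2
    · intro x; fun_prop
    · fun_prop
  · have hvp' : Function.Periodic (fun y => |v y|) 1 := fun y => by simp only [hvp]
    have hvc : Continuous (fun y => |v y|) := hv.abs
    have hb : ‖∫ z in (-1 : ℝ)..1, (1 / 2) * k (z / 2) * (- v (z - x))‖ ≤
        ∫ z in (-1 : ℝ)..1, (M / 2) * |v (z - x)| := by
      refine intervalIntegral.norm_integral_le_of_norm_le (by norm_num)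
        (Filter.Eventually.of_forall fun z _ => ?_)
        (Continuous.intervalIntegrable (by fun_prop) _ _)
      rw [norm_mul, norm_mul, norm_neg, Real.norm_eq_abs, Real.norm_eq_abs, Real.norm_eq_abs]
      have := hM (z / 2)
      have h2 : |(1 / 2 : ℝ)| = 1 / 2 := by norm_num
      rw [h2]
      have := mul_le_mul_of_nonneg_right this (abs_nonneg (v (z - x)))
      linarith
    rw [Real.norm_eq_abs] at hb
    refine hb.trans (le_of_eq ?_)
    rw [intervalIntegral.integral_const_mul,
      intervalIntegral.integral_comp_sub_right (fun y => |v y|) x,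
      ← intervalIntegral.integral_add_adjacent_intervals (b := - x)
        (hvc.intervalIntegrable _ _) (hvc.intervalIntegrable _ _)]
    have h1 := hvp'.intervalIntegral_add_eq (-1 - x) 0
    have h2 := hvp'.intervalIntegral_add_eq (-x) 0
    rw [show (-1 - x + 1 : ℝ) = -x by ring, zero_add] at h1
    rw [show (-x + 1 : ℝ) = 1 - x by ring, zero_add] at h2
    rw [h1, h2]; ring

/-- Energy inequality at a fixed time. -/
lemma aux_core {ε : ℝ} (hε : 0 < ε) (a b C : ℝ) (w u ux ut κ : ℝ → ℝ)
    (hw : ∀ x, HasDerivAt w (u x) x) (hu : ∀ x, HasDerivAt u (ux x) x)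
    (hux : Continuous ux) (hut : Continuous ut)
    (hwp : ∀ x, w (x + 1) = w x) (hup : ∀ x, u (x + 1) = u x)
    (heq : ∀ x, ut x = - a * (u x * u x + w x * ux x) - b / 2 * κ x)
    (hκ : ∀ x, |κ x| ≤ C) :
    ∫ x in (0 : ℝ)..1, u x / auxPhi ε (u x) * ut x ≤ |a| * ε ^ 2 + |b| / 2 * C := by
  have hwc : Continuous w := continuous_iff_continuousAt.2 fun x => (hw x).continuousAt
  have huc : Continuous u := continuous_iff_continuousAt.2 fun x => (hu x).continuousAt
  have hφ : Continuous (fun x => auxPhi ε (u x)) := (auxPhi_continuous ε).comp huc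
  have hφ0 : ∀ x, auxPhi ε (u x) ≠ 0 := fun x => (auxPhi_pos hε _).ne'
  set G : ℝ → ℝ := fun x => u x * auxPhi ε (u x) + w x * (u x / auxPhi ε (u x) * ux x) with hG
  have hGc : Continuous G := by
    have := huc.div hφ hφ0
    fun_prop
  have hGi : ∫ x in (0 : ℝ)..1, G x = 0 := by
    rw [intervalIntegral.integral_eq_sub_of_hasDerivAt
      (f := fun x => w x * auxPhi ε (u x)) (fun x _ => ?_) (hGc.intervalIntegrable _ _)]
    · have h1 := hwp 0
      have h2 := hup 0
      rw [zero_add] at h1 h2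
      simp [h1, h2]
    · exact (hw x).mul ((auxPhi_hasDerivAt hε (u x)).comp x (hu x))
  have hmono : ∫ x in (0 : ℝ)..1, u x / auxPhi ε (u x) * ut x ≤
      ∫ x in (0 : ℝ)..1, (-a * G x + (|a| * ε ^ 2 + |b| / 2 * C)) := by
    refine intervalIntegral.integral_mono_on (by norm_num)
      (((huc.div hφ hφ0).mul hut).intervalIntegrable _ _)
      (Continuous.intervalIntegrable (by fun_prop) _ _) fun x _ => ?_
    have hp := auxPhi_pos hε (u x)
    have hsq := auxPhi_sq ε (u x)
    have hle : |u x / auxPhi ε (u x)| ≤ 1 := by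
      rw [abs_div, abs_of_pos hp, div_le_one hp]; exact abs_le_auxPhi _ _
    set d := u x / auxPhi ε (u x) with hd
    have hud : u x = d * auxPhi ε (u x) := by rw [hd]; field_simp
    have hid : d * ut x = -a * G x + (a * (d * ε ^ 2) - b / 2 * (d * κ x)) := by
      rw [heq]
      have : u x * auxPhi ε (u x) - d * (u x * u x) = d * ε ^ 2 := by
        have h3 : u x * auxPhi ε (u x) = d * auxPhi ε (u x) ^ 2 := by
          rw [hud]
          have : auxPhi ε (d * auxPhi ε (u x)) = auxPhi ε (u x) := by rw [← hud]
          rw [this]; ring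
        rw [h3, hsq]; ring
      simp only [hG, ← hd]
      linear_combination (-a) * (-1) * this
    rw [hid]
    have h1 : a * (d * ε ^ 2) ≤ |a| * ε ^ 2 := by
      calc a * (d * ε ^ 2) ≤ |a * (d * ε ^ 2)| := le_abs_self _
        _ = |a| * (|d| * ε ^ 2) := by rw [abs_mul, abs_mul, abs_of_nonneg (sq_nonneg ε)]
        _ ≤ |a| * (1 * ε ^ 2) := by gcongr
        _ = _ := by ring
    have h2 : - (b / 2 * (d * κ x)) ≤ |b| / 2 * C := by
      calc - (b / 2 * (d * κ x)) ≤ |b / 2 * (d * κ x)| := neg_le_abs _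
        _ = |b| / 2 * (|d| * |κ x|) := by
          rw [abs_mul, abs_mul, abs_div, abs_of_pos (by norm_num : (0 : ℝ) < 2)]
        _ ≤ |b| / 2 * (1 * C) := by gcongr; exact hκ x
        _ = _ := by ring
    linarith
  refine hmono.trans (le_of_eq ?_)
  rw [intervalIntegral.integral_add ((hGc.const_mul _).intervalIntegrable _ _) (by simp),
    intervalIntegral.integral_const_mul, hGi]
  simp

/-- Periodicity of a derivative. -/
lemma aux_per {w u : ℝ → ℝ} (hw : ∀ x, HasDerivAt w (u x) x) (hp : ∀ x, w (x + 1) = w x)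
    (x : ℝ) : u (x + 1) = u x := by
  have h1 := (hw (x + 1)).comp_add_const x 1
  have h2 : (fun y => w (y + 1)) = w := funext hp
  rw [h2] at h1
  exact h1.unique (hw x)

/-- One equation at a fixed time. -/
lemma aux_eq {ε : ℝ} (hε : 0 < ε) (a b M : ℝ) (k w u q ux ut r v : ℝ → ℝ)
    (hk : Continuous k) (hkp : ∀ x, k (x + 1 / 2) = k x) (hM : ∀ x, |k x| ≤ M)
    (hw : ∀ x, HasDerivAt w (u x) x) (hu : ∀ x, HasDerivAt u (ux x) x)
    (hq : ∀ x, HasDerivAt q (ut x) x)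
    (hux : Continuous ux) (hut : Continuous ut) (hwp : ∀ x, w (x + 1) = w x)
    (hr : ∀ x, HasDerivAt r (v x) x) (hv : Continuous v) (hrp : ∀ x, r (x + 1) = r x)
    (heq : ∀ x, q x + (a / 2) * deriv (fun y => w y ^ 2) x
      + (b / 2) * (∫ y in (-1 : ℝ)..1, (1 / 2) * k ((x + y) / 2) * r y) = 0) :
    ∫ x in (0 : ℝ)..1, u x / auxPhi ε (u x) * ut x ≤
      |a| * ε ^ 2 + |b| / 2 * (M * ∫ y in (0 : ℝ)..1, |v y|) := by
  choose κ hκ1 hκ2 using aux_kernel k r v hk hkp M hM hr hv hrp (aux_per hr hrp)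
  refine aux_core hε a b _ w u ux ut κ hw hu hux hut hwp (aux_per hw hwp) ?_ hκ2
  intro x
  have hq' : q = fun x => - a * (w x * u x)
      - b / 2 * (∫ y in (-1 : ℝ)..1, (1 / 2) * k ((x + y) / 2) * r y) := by
    funext x
    have h1 := heq x
    have h2 : deriv (fun y => w y ^ 2) x = 2 * w x * u x := by
      have h := ((hw x).pow 2).deriv
      simp only [Nat.cast_ofNat, Nat.add_one_sub_one, pow_one] at h
      exact h
    rw [h2] at h1
    linarith
  have h3 := (((hw x).mul (hu x)).const_mul (-a)).sub ((hκ1 x).const_mul (b / 2))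
  have h4 := hq x
  rw [hq'] at h4
  exact h4.unique h3

/-- the `L¹` growth estimate for the space derivatives of a
`C²` classical solution:
`‖∂ₓσ₁(·,t)‖_{L¹} + ‖∂ₓσ₃(·,t)‖_{L¹} ≤ (‖∂ₓσ₁(·,0)‖_{L¹} + ‖∂ₓσ₃(·,0)‖_{L¹}) e^{(β/2) M̃_E t}`. -/
theorem classical_solution_derivative_growth
    (α β : ℝ) (hα : 0 < α) (hβ : 0 < β)
    (σ₂ : ℝ → ℝ) (hσ₂C1 : ContDiff ℝ 1 σ₂)
    (hσ₂per : ∀ x, σ₂ (x + 1 / 2) = σ₂ x)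
    (ME : ℝ) (hME : IsGreatest ((fun x => |deriv σ₂ x|) '' Set.Icc 0 (1 / 2)) ME)
    (T : ℝ) (hT : 0 ≤ T)
    (σ₁ σ₃ : ℝ → ℝ → ℝ)
    (h₁C2 : ContDiff ℝ 2 (fun p : ℝ × ℝ => σ₁ p.1 p.2))
    (h₃C2 : ContDiff ℝ 2 (fun p : ℝ × ℝ => σ₃ p.1 p.2))
    (hsol : IsClassicalSolution α β σ₂ T σ₁ σ₃) :
    ∀ t ∈ Set.Icc (0 : ℝ) T,
      (∫ x in (0 : ℝ)..1, |deriv (fun y => σ₁ y t) x|)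
          + (∫ x in (0 : ℝ)..1, |deriv (fun y => σ₃ y t) x|) ≤
        ((∫ x in (0 : ℝ)..1, |deriv (fun y => σ₁ y 0) x|)
            + (∫ x in (0 : ℝ)..1, |deriv (fun y => σ₃ y 0) x|))
          * Real.exp ((β / 2) * ME * t) := by
  obtain ⟨hp₁, hp₃, hpde⟩ := hsol
  obtain ⟨u, q, ux, ut, hu, hq, hux, hut, hqx, cu, cux, cut⟩ := aux_c2_data σ₁ h₁C2
  obtain ⟨v, p, vx, vt, hv, hp, hvx, hvt, hpx, cv, cvx, cvt⟩ := aux_c2_data σ₃ h₃C2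
  have hk : Continuous (deriv σ₂) := hσ₂C1.continuous_deriv (by norm_num)
  have hkp : ∀ x, deriv σ₂ (x + 1 / 2) = deriv σ₂ x := by
    intro x
    rw [← deriv_comp_add_const]
    congr 1
    exact funext hσ₂per
  have hM : ∀ x, |deriv σ₂ x| ≤ ME := by
    intro x
    obtain ⟨y, hy, hxy⟩ := Function.Periodic.exists_mem_Ico₀ (f := deriv σ₂) hkp (by norm_num) x
    rw [hxy]
    exact hME.2 ⟨y, ⟨hy.1, hy.2.le⟩, rfl⟩
  have hM0 : 0 ≤ ME := (abs_nonneg _).trans (hM 0)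
  have d1 : ∀ t x, deriv (fun y => σ₁ y t) x = u x t := fun t x => (hu x t).deriv
  have d3 : ∀ t x, deriv (fun y => σ₃ y t) x = v x t := fun t x => (hv x t).deriv
  simp only [d1, d3]
  have sl : ∀ {f : ℝ → ℝ → ℝ}, Continuous (fun p : ℝ × ℝ => f p.1 p.2) →
      ∀ t, Continuous (fun x => f x t) := fun hf t =>
    hf.comp (continuous_id.prodMk continuous_const)
  set c := β / 2 * ME with hc
  have hc0 : 0 ≤ c := by positivity
  set N : ℝ → ℝ := fun t => (∫ x in (0 : ℝ)..1, |u x t|) + (∫ x in (0 : ℝ)..1, |v x t|) with hN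
  intro t ht
  change N t ≤ N 0 * Real.exp (c * t)
  -- the smoothed estimate
  have key : ∀ ε : ℝ, 0 < ε →
      N t ≤ (N 0 + 2 * ε + 2 * α * ε ^ 2 * t) * Real.exp (c * t) := by
    intro ε hε
    have φd : ∀ {f f' : ℝ → ℝ → ℝ}, (∀ x t, HasDerivAt (fun s => f x s) (f' x t) t) →
        Continuous (fun p : ℝ × ℝ => f p.1 p.2) → Continuous (fun p : ℝ × ℝ => f' p.1 p.2) →
        ∀ t, HasDerivAt (fun s => ∫ x in (0 : ℝ)..1, auxPhi ε (f x s))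
          (∫ x in (0 : ℝ)..1, f x t / auxPhi ε (f x t) * f' x t) t := by
      intro f f' hf cf cf' t
      refine aux_param (fun s x => auxPhi ε (f x s))
        (fun s x => f x s / auxPhi ε (f x s) * f' x s) 0 1 ?_ ?_ ?_ t
      · intro s x
        exact (auxPhi_hasDerivAt hε (f x s)).comp s (hf x s)
      · intro s
        exact (auxPhi_continuous ε).comp (sl cf s)
      · have c1 : Continuous (fun p : ℝ × ℝ => f p.2 p.1) := cf.comp continuous_swap
        have c2 : Continuous (fun p : ℝ × ℝ => f' p.2 p.1) := cf'.comp continuous_swap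
        exact (c1.div ((auxPhi_continuous ε).comp c1) fun p => (auxPhi_pos hε _).ne').mul c2
    set F : ℝ → ℝ := fun s => (∫ x in (0 : ℝ)..1, auxPhi ε (u x s))
      + (∫ x in (0 : ℝ)..1, auxPhi ε (v x s)) with hF
    have lo : ∀ {f : ℝ → ℝ}, Continuous f →
        ∫ x in (0 : ℝ)..1, |f x| ≤ ∫ x in (0 : ℝ)..1, auxPhi ε (f x) := by
      intro f hf
      exact intervalIntegral.integral_mono_on (by norm_num) (hf.abs.intervalIntegrable _ _)
        (((auxPhi_continuous ε).comp hf).intervalIntegrable _ _) fun x _ => abs_le_auxPhi _ _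
    have hi : ∀ {f : ℝ → ℝ}, Continuous f →
        ∫ x in (0 : ℝ)..1, auxPhi ε (f x) ≤ (∫ x in (0 : ℝ)..1, |f x|) + ε := by
      intro f hf
      have h1 : ∫ x in (0 : ℝ)..1, auxPhi ε (f x) ≤ ∫ x in (0 : ℝ)..1, (|f x| + ε) :=
        intervalIntegral.integral_mono_on (by norm_num)
          (((auxPhi_continuous ε).comp hf).intervalIntegrable _ _)
          ((hf.abs.add continuous_const).intervalIntegrable _ _) fun x _ => auxPhi_le hε _
      rw [intervalIntegral.integral_add (hf.abs.intervalIntegrable _ _) (by simp)] at h1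
      simpa using h1
    have NF : ∀ s, N s ≤ F s := fun s => add_le_add (lo (sl cu s)) (lo (sl cv s))
    have FN : F 0 ≤ N 0 + 2 * ε := by
      have h1 := hi (sl cu 0)
      have h2 := hi (sl cv 0)
      simp only [hF, hN]; linarith
    have hFd := fun s => (φd hut cu cut s).add (φd hvt cv cvt s)
    set F' : ℝ → ℝ := fun s => (∫ x in (0 : ℝ)..1, u x s / auxPhi ε (u x s) * ut x s)
      + (∫ x in (0 : ℝ)..1, v x s / auxPhi ε (v x s) * vt x s) with hF'
    have hFd' : ∀ s, HasDerivAt F (F' s) s := hFd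
    have hbd : ∀ s ∈ Ioo 0 T, F' s ≤ 2 * α * ε ^ 2 + c * F s := by
      intro s hs
      have hnh : Icc 0 T ∈ nhds s := Icc_mem_nhds hs.1 hs.2
      have b1 := aux_eq hε α β ME (deriv σ₂) (fun x => σ₁ x s) (fun x => u x s) (fun x => q x s)
        (fun x => ux x s) (fun x => ut x s) (fun x => σ₃ x s) (fun x => v x s) hk hkp hM
        (fun x => hu x s) (fun x => hux x s) (fun x => hqx x s) (sl cux s) (sl cut s)
        (fun x => hp₁ x s) (fun x => hv x s) (sl cv s) (fun x => hp₃ x s) (by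
          intro x
          have h := (hpde x s ⟨hs.1.le, hs.2.le⟩).1
          rw [derivWithin_of_mem_nhds hnh, (hq x s).deriv] at h
          exact h)
      have b3 := aux_eq hε (-α) (-β) ME (deriv σ₂) (fun x => σ₃ x s) (fun x => v x s)
        (fun x => p x s)
        (fun x => vx x s) (fun x => vt x s) (fun x => σ₁ x s) (fun x => u x s) hk hkp hM
        (fun x => hv x s) (fun x => hvx x s) (fun x => hpx x s) (sl cvx s) (sl cvt s)
        (fun x => hp₃ x s) (fun x => hu x s) (sl cu s) (fun x => hp₁ x s) (by
          intro x
          have h := (hpde x s ⟨hs.1.le, hs.2.le⟩).2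
          rw [derivWithin_of_mem_nhds hnh, (hp x s).deriv] at h
          linarith)
      rw [abs_neg, abs_neg] at b3
      rw [abs_of_pos hα, abs_of_pos hβ] at b1 b3
      have h5 : c * N s ≤ c * F s := mul_le_mul_of_nonneg_left (NF s) hc0
      simp only [hF', hN, hc] at h5 ⊢
      linarith
    have hg : ∀ s, HasDerivAt (fun s => Real.exp (-c * s) * F s - 2 * α * ε ^ 2 * s)
        (Real.exp (-c * s) * (-c) * F s + Real.exp (-c * s) * F' s - 2 * α * ε ^ 2) s := by
      intro s
      have h1 : HasDerivAt (fun s : ℝ => -c * s) (-c) s := by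
        simpa using (hasDerivAt_id s).const_mul (-c)
      have h2 : HasDerivAt (fun s : ℝ => 2 * α * ε ^ 2 * s) (2 * α * ε ^ 2) s := by
        simpa using (hasDerivAt_id s).const_mul (2 * α * ε ^ 2)
      exact (h1.exp.mul (hFd' s)).sub h2
    have hanti : AntitoneOn (fun s => Real.exp (-c * s) * F s - 2 * α * ε ^ 2 * s) (Icc 0 T) := by
      refine antitoneOn_of_deriv_nonpos (convex_Icc 0 T)
        (fun s _ => (hg s).continuousAt.continuousWithinAt)
        (fun s _ => (hg s).differentiableAt.differentiableWithinAt) ?_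
      intro s hs
      rw [interior_Icc] at hs
      rw [(hg s).deriv]
      have e0 := Real.exp_pos (-c * s)
      have e1 : Real.exp (-c * s) ≤ 1 := Real.exp_le_one_iff.2 (by nlinarith [hs.1])
      have h1 := mul_le_mul_of_nonneg_left (hbd s hs) e0.le
      have h2 := mul_le_mul_of_nonneg_right e1 (by positivity : 0 ≤ 2 * α * ε ^ 2)
      nlinarith
    have h0 := hanti ⟨le_rfl, hT⟩ ht ht.1
    simp only [mul_zero, Real.exp_zero, one_mul, sub_zero] at h0
    have h1 : Real.exp (-c * t) * F t ≤ N 0 + 2 * ε + 2 * α * ε ^ 2 * t := by linarith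
    have h2 := mul_le_mul_of_nonneg_right h1 (Real.exp_pos (c * t)).le
    have h3 : Real.exp (-c * t) * F t * Real.exp (c * t) = F t := by
      rw [mul_right_comm, ← Real.exp_add]; simp
    rw [h3] at h2
    exact (NF t).trans h2
  have hlim : Filter.Tendsto (fun ε : ℝ => (N 0 + 2 * ε + 2 * α * ε ^ 2 * t) * Real.exp (c * t))
      (nhdsWithin 0 (Ioi 0)) (nhds (N 0 * Real.exp (c * t))) := by
    have hcont : Continuous
        (fun ε : ℝ => (N 0 + 2 * ε + 2 * α * ε ^ 2 * t) * Real.exp (c * t)) := by fun_prop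
    have := (hcont.tendsto 0).mono_left (nhdsWithin_le_nhds (s := Ioi 0))
    simpa using this
  exact ge_of_tendsto hlim (Filter.eventually_of_mem self_mem_nhdsWithin fun ε hε => key ε hε)
end

section
/- Assume σ₂ : ℝ → ℝ is C¹ with σ₂(x + 1/2) = σ₂(x), set M̃_E := max_{x ∈ [0,1/2]} |σ₂'(x)|, and suppose M_I / M̃_E > (3 / ln(13/12)) · (β/α), where M_I := ∫₀¹ |∂_x σ₁(x,0)| dx + ∫₀¹ |∂_x σ₃(x,0)| dx > 0. Let (σ₁, σ₃) be a C² classical solution of the system of weakly nonlinear gas dynamics on ℝ × [0,T], 1-periodic in x, with T ≤ 6/(α M_I), let z* ∈ ℝ satisfy ∂_x σ₁(z*, 0) = − M_I/4, and let x₁(t;z) be the C¹ flow of the 1-characteristic field, i.e. ∂_t x₁(t;z) = α σ₁(x₁(t;z), t), x₁(0;z) = z. Then for all t ∈ [0,T]: − M_I/3 < ∂_z [ σ₁(x₁(t;z*), t) ] < − M_I/6. -/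
open MeasureTheory Set

lemma hasDerivAt_param (g g' : ℝ → ℝ → ℝ)
    (hg : Continuous fun p : ℝ × ℝ => g p.1 p.2)
    (hg' : Continuous fun p : ℝ × ℝ => g' p.1 p.2)
    (hd : ∀ z s, HasDerivAt (fun z => g z s) (g' z s) z) (a b z : ℝ) :
    HasDerivAt (fun z => ∫ s in a..b, g z s) (∫ s in a..b, g' z s) z := by
  obtain ⟨C, hC⟩ := ((isCompact_Icc (a := z - 1) (b := z + 1)).prod
    (isCompact_uIcc (a := a) (b := b))).exists_bound_of_continuousOn hg'.continuousOn
  have c1 : ∀ w, Continuous (g w) := fun w => hg.comp (by fun_prop : Continuous fun s => (w, s))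
  have c2 : ∀ w, Continuous (g' w) := fun w => hg'.comp (by fun_prop : Continuous fun s => (w, s))
  refine (intervalIntegral.hasDerivAt_integral_of_dominated_loc_of_deriv_le
    (s := Icc (z - 1) (z + 1)) (bound := fun _ => C) (Icc_mem_nhds (by linarith) (by linarith))
    ?_ ((c1 z).intervalIntegrable _ _) (c2 z).aestronglyMeasurable ?_ (by simp) ?_).2
  · exact Filter.Eventually.of_forall fun w => (c1 w).aestronglyMeasurable
  · refine Filter.Eventually.of_forall fun t ht x hx => ?_
    exact hC (x, t) ⟨hx, uIoc_subset_uIcc ht⟩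
  · exact Filter.Eventually.of_forall fun t ht x hx => hd x t

lemma continuous_param (g : ℝ → ℝ → ℝ → ℝ)
    (hg : Continuous fun p : (ℝ × ℝ) × ℝ => g p.1.1 p.1.2 p.2) (a b : ℝ) :
    Continuous fun p : ℝ × ℝ => ∫ y in a..b, g p.1 p.2 y :=
  intervalIntegral.continuous_parametric_intervalIntegral_of_continuous'
    (f := fun p : ℝ × ℝ => g p.1 p.2) hg a b

lemma continuous_param1 (g : ℝ → ℝ → ℝ)
    (hg : Continuous fun p : ℝ × ℝ => g p.1 p.2) (a b : ℝ) :
    Continuous fun t : ℝ => ∫ y in a..b, g t y :=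
  intervalIntegral.continuous_parametric_intervalIntegral_of_continuous'
    (f := g) hg a b

lemma c1_pack (σ : ℝ → ℝ → ℝ) (h : ContDiff ℝ 1 (fun p : ℝ × ℝ => σ p.1 p.2)) :
    ∃ sx st : ℝ → ℝ → ℝ,
      (Continuous fun p : ℝ × ℝ => sx p.1 p.2) ∧ (Continuous fun p : ℝ × ℝ => st p.1 p.2) ∧
      (∀ x t, HasDerivAt (fun y => σ y t) (sx x t) x) ∧
      (∀ x t, HasDerivAt (fun s => σ x s) (st x t) t) ∧
      (∀ (X : ℝ → ℝ) (X' t : ℝ) (S : Set ℝ), HasDerivWithinAt X X' S t →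
        HasDerivWithinAt (fun s => σ (X s) s) (sx (X t) t * X' + st (X t) t) S t) ∧
      (∀ x t, sx x t = fderiv ℝ (fun p : ℝ × ℝ => σ p.1 p.2) (x, t) (1, 0)) ∧
      (∀ x t, st x t = fderiv ℝ (fun p : ℝ × ℝ => σ p.1 p.2) (x, t) (0, 1)) := by
  set f := fun p : ℝ × ℝ => σ p.1 p.2 with hf
  have hd : ∀ p, HasFDerivAt f (fderiv ℝ f p) p := fun p =>
    (h.differentiable (by norm_num) p).hasFDerivAt
  have hc : Continuous (fderiv ℝ f) := h.continuous_fderiv (by norm_num)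
  refine ⟨fun x t => fderiv ℝ f (x, t) (1, 0), fun x t => fderiv ℝ f (x, t) (0, 1),
    ?_, ?_, ?_, ?_, ?_, fun _ _ => rfl, fun _ _ => rfl⟩
  · exact hc.clm_apply continuous_const
  · exact hc.clm_apply continuous_const
  · intro x t
    exact (hd (x, t)).comp_hasDerivAt x ((hasDerivAt_id x).prodMk (hasDerivAt_const x t))
  · intro x t
    exact (hd (x, t)).comp_hasDerivAt t ((hasDerivAt_const t x).prodMk (hasDerivAt_id t))
  · intro X X' t S hX
    have := HasFDerivAt.comp_hasDerivWithinAt (f := fun s => (X s, s)) t (hd (X t, t))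
      (hX.prodMk (hasDerivWithinAt_id t S))
    refine this.congr_deriv ?_
    have e : (X', (1:ℝ)) = X' • ((1:ℝ), (0:ℝ)) + (0, 1) := by simp
    rw [e, map_add, map_smul, smul_eq_mul]
    ring

lemma c2_pack (σ : ℝ → ℝ → ℝ) (h : ContDiff ℝ 2 (fun p : ℝ × ℝ => σ p.1 p.2)) :
    ∃ sx st sxx m : ℝ → ℝ → ℝ,
      (Continuous fun p : ℝ × ℝ => sx p.1 p.2) ∧ (Continuous fun p : ℝ × ℝ => st p.1 p.2) ∧
      (Continuous fun p : ℝ × ℝ => sxx p.1 p.2) ∧ (Continuous fun p : ℝ × ℝ => m p.1 p.2) ∧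
      (∀ x t, HasDerivAt (fun y => σ y t) (sx x t) x) ∧
      (∀ x t, HasDerivAt (fun s => σ x s) (st x t) t) ∧
      (∀ x t, HasDerivAt (fun y => sx y t) (sxx x t) x) ∧
      (∀ x t, HasDerivAt (fun s => sx x s) (m x t) t) ∧
      (∀ x t, HasDerivAt (fun y => st y t) (m x t) x) ∧
      (∀ (X : ℝ → ℝ) (X' t : ℝ) (S : Set ℝ), HasDerivWithinAt X X' S t →
        HasDerivWithinAt (fun s => σ (X s) s) (sx (X t) t * X' + st (X t) t) S t) := by
  obtain ⟨sx, st, csx, cst, dx, dt, ch, ex, et⟩ := c1_pack σ (h.of_le (by norm_num))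
  set f := fun p : ℝ × ℝ => σ p.1 p.2 with hf
  have hc : ContDiff ℝ 1 (fderiv ℝ f) := h.fderiv_right (by norm_num)
  have hsx : ContDiff ℝ 1 (fun p : ℝ × ℝ => sx p.1 p.2) := by
    simp only [ex]; exact hc.clm_apply contDiff_const
  have hst : ContDiff ℝ 1 (fun p : ℝ × ℝ => st p.1 p.2) := by
    simp only [et]; exact hc.clm_apply contDiff_const
  obtain ⟨sxx, sxt, c1, c2, d1, d2, -, -, e2⟩ := c1_pack sx hsx
  obtain ⟨stx, stt, c3, c4, d3, d4, -, e3, -⟩ := c1_pack st hst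
  have hdd : ∀ p, DifferentiableAt ℝ (fderiv ℝ f) p := fun p => hc.differentiable (by norm_num) p
  have key : ∀ x t, stx x t = sxt x t := by
    intro x t
    have hs : IsSymmSndFDerivAt ℝ f (x, t) := h.contDiffAt.isSymmSndFDerivAt (by simp)
    have := hs (1, 0) (0, 1)
    rw [e2, e3]
    simp only [ex, et]
    rw [fderiv_clm_apply (hdd _) (differentiableAt_const _),
      fderiv_clm_apply (hdd _) (differentiableAt_const _)]
    simpa using this
  refine ⟨sx, st, sxx, sxt, csx, cst, c1, c2, dx, dt, d1, d2, ?_, ch⟩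
  intro x t
  rw [← key]; exact d3 x t

/-- regularised energy estimate -/
lemma energy (s : ℝ → ℝ → ℝ) (sx st sxx m : ℝ → ℝ → ℝ) (hper : ∀ x t, s (x + 1) t = s x t)
    (csx : Continuous fun p : ℝ × ℝ => sx p.1 p.2)
    (csxx : Continuous fun p : ℝ × ℝ => sxx p.1 p.2)
    (cm : Continuous fun p : ℝ × ℝ => m p.1 p.2)
    (dx : ∀ x t, HasDerivAt (fun y => s y t) (sx x t) x)
    (dxx : ∀ x t, HasDerivAt (fun y => sx y t) (sxx x t) x)
    (dxt : ∀ x t, HasDerivAt (fun u => sx x u) (m x t) t)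
    (dtx : ∀ x t, HasDerivAt (fun y => st y t) (m x t) x)
    (a : ℝ) (S : Set ℝ) (h hx : ℝ → ℝ → ℝ) (B : ℝ → ℝ)
    (chx : Continuous fun p : ℝ × ℝ => hx p.1 p.2)
    (dh : ∀ x t, HasDerivAt (fun y => h y t) (hx x t) x)
    (hB : ∀ x t, |hx x t| ≤ B t)
    (heq : ∀ t ∈ S, ∀ x, st x t = -(a * (s x t * sx x t)) - h x t)
    (ε : ℝ) (hε : 0 < ε) :
    ∃ E' : ℝ → ℝ, (∀ t, HasDerivAt (fun t => ∫ x in (0:ℝ)..1, √(sx x t ^ 2 + ε ^ 2)) (E' t) t) ∧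
      ∀ t ∈ S, E' t ≤ |a| * ε ^ 2 + B t := by
  have hpos : ∀ x t, 0 < sx x t ^ 2 + ε ^ 2 := fun x t => by positivity
  have hη : ∀ x t, 0 < √(sx x t ^ 2 + ε ^ 2) := fun x t => Real.sqrt_pos.2 (hpos x t)
  have hsq : ∀ x t, √(sx x t ^ 2 + ε ^ 2) ^ 2 = sx x t ^ 2 + ε ^ 2 :=
    fun x t => Real.sq_sqrt (hpos x t).le
  have hsxle : ∀ x t, |sx x t| ≤ √(sx x t ^ 2 + ε ^ 2) := fun x t =>
    Real.abs_le_sqrt (by nlinarith [sq_nonneg ε])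
  have cη : Continuous fun p : ℝ × ℝ => √(sx p.1 p.2 ^ 2 + ε ^ 2) := by fun_prop
  have hperx : ∀ x t, sx (x + 1) t = sx x t := by
    intro x t
    have h1 := (dx (x + 1) t).comp_add_const x 1
    simp only [hper] at h1
    exact h1.unique (dx x t)
  refine ⟨fun t => ∫ x in (0:ℝ)..1, sx x t * m x t / √(sx x t ^ 2 + ε ^ 2), ?_, ?_⟩
  · intro t
    refine hasDerivAt_param (fun t x => √(sx x t ^ 2 + ε ^ 2))
      (fun t x => sx x t * m x t / √(sx x t ^ 2 + ε ^ 2)) ?_ ?_ ?_ 0 1 t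
    · exact cη.comp continuous_swap
    · exact (((csx.mul cm).div cη (fun p => (hη _ _).ne'))).comp continuous_swap
    · intro t x
      have := (((dxt x t).pow 2).add_const (ε ^ 2)).sqrt (hpos x t).ne'
      refine this.congr_deriv ?_
      have := (hη x t).ne'
      simp only [Pi.pow_apply]
      field_simp
      simp
      ring
  · intro t ht
    have slice : ∀ g : ℝ → ℝ → ℝ, (Continuous fun p : ℝ × ℝ => g p.1 p.2) →
        Continuous fun x => g x t := fun g hg => hg.comp (by fun_prop : Continuous fun x => (x, t))
    have k1 := slice _ csx
    have k2 := slice _ csxx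
    have k3 := slice _ cm
    have k4 := slice _ chx
    have k5 := slice (fun x t => √(sx x t ^ 2 + ε ^ 2)) cη
    have k6 : Continuous fun x => s x t :=
      continuous_iff_continuousAt.2 fun x => (dx x t).continuousAt
    have hm : ∀ x, m x t = -(a * (sx x t * sx x t + s x t * sxx x t)) - hx x t := by
      intro x
      have e : (fun y => st y t) = fun y => -(a * (s y t * sx y t)) - h y t :=
        funext fun y => heq t ht y
      have d := dtx x t
      rw [e] at d
      exact d.unique (((((dx x t).mul (dxx x t)).const_mul a).neg).sub (dh x t))
    have hD : ∀ x, HasDerivAt (fun x => s x t * √(sx x t ^ 2 + ε ^ 2))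
        (sx x t * √(sx x t ^ 2 + ε ^ 2) + s x t * (sx x t * sxx x t / √(sx x t ^ 2 + ε ^ 2))) x := by
      intro x
      have := (((dxx x t).pow 2).add_const (ε ^ 2)).sqrt (hpos x t).ne'
      refine ((dx x t).mul this).congr_deriv ?_
      have := (hη x t).ne'
      simp only [Pi.pow_apply]
      field_simp
      simp
      ring
    have kD : Continuous fun x => (sx x t * √(sx x t ^ 2 + ε ^ 2)
        + s x t * (sx x t * sxx x t / √(sx x t ^ 2 + ε ^ 2))) :=
      (k1.mul k5).add (k6.mul ((k1.mul k2).div k5 fun x => (hη x t).ne'))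
    have hI := intervalIntegral.integral_eq_sub_of_hasDerivAt (a := 0) (b := 1)
      (fun x _ => hD x) (kD.intervalIntegrable _ _)
    have hz : s 1 t * √(sx 1 t ^ 2 + ε ^ 2) - s 0 t * √(sx 0 t ^ 2 + ε ^ 2) = 0 := by
      have := hper 0 t
      have := hperx 0 t
      simp_all
    rw [hz] at hI
    have kL : Continuous fun x => sx x t * m x t / √(sx x t ^ 2 + ε ^ 2) :=
      (k1.mul k3).div k5 fun x => (hη x t).ne'
    have hle : ∫ x in (0:ℝ)..1, (sx x t * m x t / √(sx x t ^ 2 + ε ^ 2)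
        + a * (sx x t * √(sx x t ^ 2 + ε ^ 2)
        + s x t * (sx x t * sxx x t / √(sx x t ^ 2 + ε ^ 2))))
        ≤ ∫ x in (0:ℝ)..1, (|a| * ε ^ 2 + B t) := by
      refine intervalIntegral.integral_mono_on zero_le_one
        ((kL.add (kD.const_mul a)).intervalIntegrable _ _) (by simp) ?_
      intro x _
      set η := √(sx x t ^ 2 + ε ^ 2) with hηdef
      have hη0 : 0 < η := hη x t
      have hη2 : η ^ 2 = sx x t ^ 2 + ε ^ 2 := hsq x t
      have hr : |sx x t / η| ≤ 1 := by
        rw [abs_div, abs_of_pos hη0, div_le_one hη0]; exact hsxle x t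
      have e : sx x t * m x t / η + a * (sx x t * η + s x t * (sx x t * sxx x t / η))
          = a * ε ^ 2 * (sx x t / η) - hx x t * (sx x t / η) := by
        rw [hm x]
        field_simp
        rw [hη2]; ring
      rw [e]
      have b1 : a * ε ^ 2 * (sx x t / η) ≤ |a| * ε ^ 2 := by
        refine (le_abs_self _).trans ?_
        rw [abs_mul, abs_mul, abs_of_nonneg (sq_nonneg ε)]
        exact mul_le_of_le_one_right (by positivity) hr
      have b2 : -(hx x t * (sx x t / η)) ≤ B t := by
        refine (neg_le_abs _).trans ?_
        rw [abs_mul]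
        exact (mul_le_of_le_one_right (abs_nonneg _) hr).trans (hB x t)
      linarith
    rw [intervalIntegral.integral_add (kL.intervalIntegrable _ _)
      ((kD.const_mul a).intervalIntegrable _ _), intervalIntegral.integral_const_mul, hI] at hle
    simpa using hle

/-- the nonlocal term -/
lemma nonlocal (σ₂ : ℝ → ℝ) (hσ₂C1 : ContDiff ℝ 1 σ₂)
    (hσ₂per : ∀ x, σ₂ (x + 1 / 2) = σ₂ x)
    (ME : ℝ) (hME : IsGreatest ((fun x => |deriv σ₂ x|) '' Set.Icc 0 (1 / 2)) ME)
    (s sx : ℝ → ℝ → ℝ) (hper : ∀ x t, s (x + 1) t = s x t)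
    (csx : Continuous fun p : ℝ × ℝ => sx p.1 p.2)
    (dx : ∀ x t, HasDerivAt (fun y => s y t) (sx x t) x) :
    ∃ hx : ℝ → ℝ → ℝ, (Continuous fun p : ℝ × ℝ => hx p.1 p.2) ∧
      (∀ x t, HasDerivAt (fun x => ∫ y in (-1 : ℝ)..1, (1 / 2) * deriv σ₂ ((x + y) / 2) * s y t)
        (hx x t) x) ∧
      ∀ x t, |hx x t| ≤ ME * ∫ y in (0:ℝ)..1, |sx y t| := by
  have c2 : Continuous (deriv σ₂) := hσ₂C1.continuous_deriv (by norm_num)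
  have c2' : Continuous σ₂ := hσ₂C1.continuous
  have d2 : ∀ x, HasDerivAt σ₂ (deriv σ₂ x) x :=
    fun x => (hσ₂C1.differentiable (by norm_num) x).hasDerivAt
  have hperx : ∀ x t, sx (x + 1) t = sx x t := by
    intro x t
    have h1 := (dx (x + 1) t).comp_add_const x 1
    simp only [hper] at h1
    exact h1.unique (dx x t)
  have hdper : Function.Periodic (deriv σ₂) (1 / 2) := by
    intro x
    have h1 := (d2 (x + 1 / 2)).comp_add_const x (1 / 2)
    simp only [hσ₂per] at h1
    exact h1.unique (d2 x)
  have hMEall : ∀ x, |deriv σ₂ x| ≤ ME := by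
    intro x
    obtain ⟨y, hy, hxy⟩ := hdper.exists_mem_Ico₀ (by norm_num) x
    rw [hxy]
    exact hME.2 ⟨y, Ico_subset_Icc_self hy, rfl⟩
  have slice : ∀ t, Continuous fun x => sx x t :=
    fun t => csx.comp (by fun_prop : Continuous fun x => (x, t))
  have dlin : ∀ x y : ℝ, HasDerivAt (fun x => (x + y) / 2) (1 / 2) x := fun x y =>
    ((hasDerivAt_id x).add_const y).div_const 2
  have dlin' : ∀ x y : ℝ, HasDerivAt (fun y => (x + y) / 2) (1 / 2) y := fun x y =>
    ((hasDerivAt_id y).const_add x).div_const 2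
  have e : ∀ x t, ∫ y in (-1 : ℝ)..1, (1 / 2) * deriv σ₂ ((x + y) / 2) * s y t
      = - ∫ y in (-1 : ℝ)..1, σ₂ ((x + y) / 2) * sx y t := by
    intro x t
    have := intervalIntegral.integral_mul_deriv_eq_deriv_mul (a := -1) (b := 1)
      (u := fun y => σ₂ ((x + y) / 2)) (u' := fun y => (1 / 2) * deriv σ₂ ((x + y) / 2))
      (v := fun y => s y t) (v' := fun y => sx y t)
      (fun y _ => ((d2 _).comp y (dlin' x y)).congr_deriv (by ring)) (fun y _ => dx y t)
      ((by fun_prop : Continuous _).intervalIntegrable _ _)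
      ((slice t).intervalIntegrable _ _)
    have p1 : s 1 t = s (-1) t := by
      have h1 := hper (-1) t
      have h2 := hper 0 t
      norm_num at h1 h2
      rw [h2, h1]
    have p2 : σ₂ ((x + 1) / 2) = σ₂ ((x + -1) / 2) := by
      rw [← hσ₂per ((x + -1) / 2), ← hσ₂per ((x + -1) / 2 + 1 / 2)]
      congr 1; ring
    simp only [p1, p2, sub_self, zero_sub] at this
    linarith
  refine ⟨fun x t => - ∫ y in (-1 : ℝ)..1, (1 / 2) * deriv σ₂ ((x + y) / 2) * sx y t, ?_, ?_, ?_⟩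
  · refine (continuous_param (fun x t y => (1 / 2) * deriv σ₂ ((x + y) / 2) * sx y t) ?_ _ _).neg
    have : Continuous fun p : (ℝ × ℝ) × ℝ => sx p.2 p.1.2 :=
      csx.comp (by fun_prop : Continuous fun p : (ℝ × ℝ) × ℝ => (p.2, p.1.2))
    fun_prop
  · intro x t
    simp only [e]
    have : Continuous fun p : ℝ × ℝ => sx p.2 t :=
      csx.comp (by fun_prop : Continuous fun p : ℝ × ℝ => (p.2, t))
    refine (hasDerivAt_param (fun x y => σ₂ ((x + y) / 2) * sx y t)
      (fun x y => (1 / 2) * deriv σ₂ ((x + y) / 2) * sx y t) (by fun_prop) (by fun_prop) ?_ _ _ x).neg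
    intro x y
    exact (((d2 _).comp x (dlin x y)).mul_const (sx y t)).congr_deriv (by ring)
  · intro x t
    rw [abs_neg]
    have ka : Continuous fun y => |sx y t| := (slice t).abs
    have st := slice t
    have b1 : |∫ y in (-1 : ℝ)..1, (1 / 2) * deriv σ₂ ((x + y) / 2) * sx y t|
        ≤ ∫ y in (-1 : ℝ)..1, (ME / 2) * |sx y t| := by
      refine (intervalIntegral.abs_integral_le_integral_abs (by norm_num)).trans ?_
      refine intervalIntegral.integral_mono_on (by norm_num)
        ((by fun_prop : Continuous _).intervalIntegrable _ _)
        ((by fun_prop : Continuous _).intervalIntegrable _ _) ?_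
      intro y _
      rw [abs_mul, abs_mul, abs_of_pos (by norm_num : (0:ℝ) < 1 / 2)]
      refine mul_le_mul_of_nonneg_right ?_ (abs_nonneg _)
      linarith [hMEall ((x + y) / 2)]
    refine b1.trans (le_of_eq ?_)
    rw [intervalIntegral.integral_const_mul]
    have hp : Function.Periodic (fun y => |sx y t|) 1 := fun y => by simp only [hperx]
    have h1 := hp.intervalIntegral_add_eq (-1) 0
    norm_num at h1
    rw [← intervalIntegral.integral_add_adjacent_intervals (b := 0)
      (ka.intervalIntegrable _ _) (ka.intervalIntegrable _ _), h1]
    ring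

/-- time derivative within `[0,T]` and the pointwise equation -/
lemma eq_of_derivWithin {T t : ℝ} (hT : 0 < T) (ht : t ∈ Icc (0:ℝ) T) (f : ℝ → ℝ) (f' : ℝ)
    (h : HasDerivAt f f' t) : derivWithin f (Icc 0 T) t = f' :=
  h.hasDerivWithinAt.derivWithin (uniqueDiffOn_Icc hT t ht)

/-- total variation growth -/
lemma tv_bound_s10 (α K T MI : ℝ) (hK : 0 < K) (p q : ℝ → ℝ → ℝ)
    (cp : Continuous fun z : ℝ × ℝ => p z.1 z.2) (cq : Continuous fun z : ℝ × ℝ => q z.1 z.2)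
    (hMI : MI = (∫ x in (0 : ℝ)..1, |p x 0|) + ∫ x in (0 : ℝ)..1, |q x 0|)
    (hp : ∀ ε : ℝ, 0 < ε → ∃ E' : ℝ → ℝ,
      (∀ t, HasDerivAt (fun t => ∫ x in (0:ℝ)..1, √(p x t ^ 2 + ε ^ 2)) (E' t) t) ∧
      ∀ t ∈ Icc 0 T, E' t ≤ α * ε ^ 2 + K * ∫ y in (0:ℝ)..1, |q y t|)
    (hq : ∀ ε : ℝ, 0 < ε → ∃ E' : ℝ → ℝ,
      (∀ t, HasDerivAt (fun t => ∫ x in (0:ℝ)..1, √(q x t ^ 2 + ε ^ 2)) (E' t) t) ∧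
      ∀ t ∈ Icc 0 T, E' t ≤ α * ε ^ 2 + K * ∫ y in (0:ℝ)..1, |p y t|)
    (t : ℝ) (ht : t ∈ Icc 0 T) :
    ∫ y in (0:ℝ)..1, |q y t| ≤ MI * Real.exp (K * t) := by
  have slice : ∀ g : ℝ → ℝ → ℝ, (Continuous fun z : ℝ × ℝ => g z.1 z.2) → ∀ t,
      Continuous fun x => g x t := fun g hg t => hg.comp (by fun_prop : Continuous fun x => (x, t))
  have lo : ∀ g : ℝ → ℝ → ℝ, (Continuous fun z : ℝ × ℝ => g z.1 z.2) → ∀ ε t,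
      ∫ y in (0:ℝ)..1, |g y t| ≤ ∫ x in (0:ℝ)..1, √(g x t ^ 2 + ε ^ 2) := by
    intro g hg ε t
    have := slice g hg t
    refine intervalIntegral.integral_mono_on zero_le_one
      ((by fun_prop : Continuous _).intervalIntegrable _ _)
      ((by fun_prop : Continuous _).intervalIntegrable _ _) ?_
    intro x _
    exact Real.abs_le_sqrt (by nlinarith [sq_nonneg ε])
  have hi : ∀ g : ℝ → ℝ → ℝ, (Continuous fun z : ℝ × ℝ => g z.1 z.2) → ∀ ε t, 0 < ε →
      ∫ x in (0:ℝ)..1, √(g x t ^ 2 + ε ^ 2) ≤ (∫ y in (0:ℝ)..1, |g y t|) + ε := by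
    intro g hg ε t hε
    have := slice g hg t
    have h1 : ∫ x in (0:ℝ)..1, √(g x t ^ 2 + ε ^ 2) ≤ ∫ y in (0:ℝ)..1, (|g y t| + ε) := by
      refine intervalIntegral.integral_mono_on zero_le_one
        ((by fun_prop : Continuous _).intervalIntegrable _ _)
        ((by fun_prop : Continuous _).intervalIntegrable _ _) ?_
      intro x _
      refine Real.sqrt_le_iff.2 ⟨by positivity, ?_⟩
      nlinarith [abs_nonneg (g x t), sq_abs (g x t)]
    rw [intervalIntegral.integral_add (this.abs.intervalIntegrable _ _) (by simp)] at h1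
    simpa using h1
  have main : ∀ ε : ℝ, 0 < ε → ∫ y in (0:ℝ)..1, |q y t| ≤
      (MI + 2 * ε) * Real.exp (K * t) + 2 * α * ε ^ 2 / K * (Real.exp (K * t) - 1) := by
    intro ε hε
    obtain ⟨P', dP, bP⟩ := hp ε hε
    obtain ⟨Q', dQ, bQ⟩ := hq ε hε
    have dE := fun t => (dP t).add (dQ t)
    have g := le_gronwallBound_of_liminf_deriv_right_le (a := 0) (b := T) (δ := MI + 2 * ε)
      (K := K) (ε := 2 * α * ε ^ 2)
      (f := (fun t => ∫ x in (0:ℝ)..1, √(p x t ^ 2 + ε ^ 2)) +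
        (fun t => ∫ x in (0:ℝ)..1, √(q x t ^ 2 + ε ^ 2)))
      (f' := fun t => P' t + Q' t)
      (fun t _ => (dE t).continuousAt.continuousWithinAt)
      (fun t _ r hr => by
        have := (dE t).hasDerivWithinAt.liminf_right_slope_le hr
        simpa only [slope_def_field, div_eq_inv_mul] using this)
      (by
        have h1 := hi p cp ε 0 hε
        have h2 := hi q cq ε 0 hε
        simp only [Pi.add_apply]
        linarith)
      (by
        intro t ht
        have h1 := bP t (Ico_subset_Icc_self ht)
        have h2 := bQ t (Ico_subset_Icc_self ht)
        have h3 := mul_le_mul_of_nonneg_left (lo p cp ε t) hK.le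
        have h4 := mul_le_mul_of_nonneg_left (lo q cq ε t) hK.le
        simp only [Pi.add_apply]
        linarith) t ht
    rw [gronwallBound_of_K_ne_0 hK.ne', sub_zero] at g
    refine le_trans ?_ g
    have h3 := lo q cq ε t
    have h4 : 0 ≤ ∫ x in (0:ℝ)..1, √(p x t ^ 2 + ε ^ 2) :=
      intervalIntegral.integral_nonneg zero_le_one fun _ _ => Real.sqrt_nonneg _
    simp only [Pi.add_apply]
    linarith
  have lim : Filter.Tendsto (fun ε : ℝ => (MI + 2 * ε) * Real.exp (K * t)
      + 2 * α * ε ^ 2 / K * (Real.exp (K * t) - 1)) (nhdsWithin 0 (Ioi 0))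
      (nhds (MI * Real.exp (K * t))) := by
    have c : Continuous (fun ε : ℝ => (MI + 2 * ε) * Real.exp (K * t)
      + 2 * α * ε ^ 2 / K * (Real.exp (K * t) - 1)) := by fun_prop
    have := c.tendsto 0
    simp only [mul_zero, add_zero, ne_eq, OfNat.ofNat_ne_zero, not_false_eq_true, zero_pow,
      zero_div, zero_mul] at this
    exact this.mono_left nhdsWithin_le_nhds
  exact ge_of_tendsto lim (eventually_nhdsWithin_of_forall main)

/-- the continuity argument -/
lemma bootstrap_ode (α K T MI : ℝ) (hα : 0 < α) (hK : 0 < K) (hMI : 0 < MI)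
    (hT : T ≤ 6 / (α * MI)) (hKT : Real.exp (K * T) < 13 / 12)
    (w J G : ℝ → ℝ) (cw : Continuous w) (cJ : Continuous J) (cG : Continuous G)
    (hJ : ∀ t ∈ Icc 0 T, J t = 1 + α * ∫ s in (0:ℝ)..t, w s)
    (hw : ∀ t ∈ Icc 0 T, w t = -(MI / 4) - ∫ s in (0:ℝ)..t, G s * J s)
    (hG : ∀ t ∈ Icc 0 T, |G t| ≤ K * (MI * Real.exp (K * t))) :
    ∀ t ∈ Icc (0:ℝ) T, -(MI / 3) < w t ∧ w t < -(MI / 6) := by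
  by_contra! hcon
  obtain ⟨t₁, ht₁, hbad⟩ := hcon
  have hne : (Icc (0:ℝ) T ∩ {t | MI / 12 ≤ |w t + MI / 4|}).Nonempty := by
    refine ⟨t₁, ht₁, ?_⟩
    by_contra hlt
    simp only [mem_ofPred_eq, not_le, abs_lt] at hlt
    have := hbad (by linarith [hlt.1])
    linarith [hlt.2]
  have hcpt : IsCompact (Icc (0:ℝ) T ∩ {t | MI / 12 ≤ |w t + MI / 4|}) :=
    isCompact_Icc.inter_right (isClosed_le (by fun_prop) (by fun_prop))
  obtain ⟨t₀, ⟨ht₀, hb⟩, hmin⟩ := hcpt.exists_isLeast hne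
  have hlt : ∀ s ∈ Ico (0:ℝ) t₀, |w s + MI / 4| < MI / 12 := by
    intro s hs
    by_contra hge
    have := hmin ⟨⟨hs.1, hs.2.le.trans ht₀.2⟩, not_lt.1 hge⟩
    linarith [hs.2]
  have hJ1 : ∀ s ∈ Ico (0:ℝ) t₀, |J s| ≤ 1 := by
    intro s hs
    have hsT : s ∈ Icc 0 T := ⟨hs.1, hs.2.le.trans ht₀.2⟩
    rw [hJ s hsT]
    have u1 : ∫ u in (0:ℝ)..s, w u ≤ ∫ u in (0:ℝ)..s, (0:ℝ) := by
      refine intervalIntegral.integral_mono_on hs.1 (cw.intervalIntegrable _ _) (by simp) ?_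
      intro u hu
      have := abs_lt.1 (hlt u ⟨hu.1, hu.2.trans_lt hs.2⟩)
      linarith [this.2]
    have u2 : ∫ u in (0:ℝ)..s, (-(MI / 3)) ≤ ∫ u in (0:ℝ)..s, w u := by
      refine intervalIntegral.integral_mono_on hs.1 (by simp) (cw.intervalIntegrable _ _) ?_
      intro u hu
      have := abs_lt.1 (hlt u ⟨hu.1, hu.2.trans_lt hs.2⟩)
      linarith [this.1]
    simp only [intervalIntegral.integral_const, sub_zero, smul_eq_mul, mul_zero] at u1 u2
    have hs6 : s * (α * MI) ≤ 6 := (le_div_iff₀ (by positivity)).1 (hsT.2.trans hT)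
    have v1 := mul_le_mul_of_nonneg_left u1 hα.le
    have v2 := mul_le_mul_of_nonneg_left u2 hα.le
    rw [abs_le]
    constructor <;> nlinarith
  have hintg : |∫ s in (0:ℝ)..t₀, G s * J s| ≤ ∫ s in (0:ℝ)..t₀, K * (MI * Real.exp (K * s)) := by
    refine (intervalIntegral.abs_integral_le_integral_abs ht₀.1).trans ?_
    refine intervalIntegral.integral_mono_on_of_le_Ioo ht₀.1
      ((by fun_prop : Continuous _).intervalIntegrable _ _)
      ((by fun_prop : Continuous _).intervalIntegrable _ _) ?_
    intro s hs
    rw [abs_mul]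
    exact (mul_le_of_le_one_right (abs_nonneg _) (hJ1 s ⟨hs.1.le, hs.2⟩)).trans
      (hG s ⟨hs.1.le, hs.2.le.trans ht₀.2⟩)
  have hexp : ∫ s in (0:ℝ)..t₀, K * (MI * Real.exp (K * s)) = MI * (Real.exp (K * t₀) - 1) := by
    have hd : ∀ s ∈ uIcc 0 t₀, HasDerivAt (fun s => MI * Real.exp (K * s))
        (K * (MI * Real.exp (K * s))) s := by
      intro s _
      have := (((hasDerivAt_id s).const_mul K).exp).const_mul MI
      refine this.congr_deriv ?_
      simp; ring
    rw [intervalIntegral.integral_eq_sub_of_hasDerivAt hd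
      ((by fun_prop : Continuous _).intervalIntegrable _ _)]
    simp; ring
  have hle : Real.exp (K * t₀) < 13 / 12 :=
    (Real.exp_le_exp.2 (mul_le_mul_of_nonneg_left ht₀.2 hK.le)).trans_lt hKT
  have e : w t₀ + MI / 4 = - ∫ s in (0:ℝ)..t₀, G s * J s := by rw [hw t₀ ht₀]; ring
  simp only [mem_ofPred_eq] at hb
  rw [e, abs_neg] at hb
  rw [hexp] at hintg
  nlinarith

/-- the bootstrap estimate.  Under the strong-sound-wave
condition, along the 1-characteristic flow issued from a point `z*` where
`∂ₓσ₁(z*,0) = -M_I/4`, the quantity `∂_z[σ₁(x₁(t;z*),t)]` stays in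
`(-M_I/3, -M_I/6)` for all `t ∈ [0,T]` with `T ≤ 6/(α M_I)`. -/
theorem bootstrap_estimate
    (α β : ℝ) (hα : 0 < α) (hβ : 0 < β)
    (σ₂ : ℝ → ℝ) (hσ₂C1 : ContDiff ℝ 1 σ₂)
    (hσ₂per : ∀ x, σ₂ (x + 1 / 2) = σ₂ x)
    (ME : ℝ) (hME : IsGreatest ((fun x => |deriv σ₂ x|) '' Set.Icc 0 (1 / 2)) ME)
    (T : ℝ) (hT0 : 0 ≤ T)
    (σ₁ σ₃ : ℝ → ℝ → ℝ)
    (h₁C2 : ContDiff ℝ 2 (fun p : ℝ × ℝ => σ₁ p.1 p.2))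
    (h₃C2 : ContDiff ℝ 2 (fun p : ℝ × ℝ => σ₃ p.1 p.2))
    (hsol : IsClassicalSolution α β σ₂ T σ₁ σ₃)
    (MI : ℝ)
    (hMI : MI = (∫ x in (0 : ℝ)..1, |deriv (fun y => σ₁ y 0) x|)
        + ∫ x in (0 : ℝ)..1, |deriv (fun y => σ₃ y 0) x|)
    (hMIpos : 0 < MI)
    (hcond : MI / ME > (3 / Real.log (13 / 12)) * (β / α))
    (hT : T ≤ 6 / (α * MI))
    (zstar : ℝ) (hzstar : deriv (fun y => σ₁ y 0) zstar = -(MI / 4))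
    (x₁ : ℝ → ℝ → ℝ)
    (hx₁C1 : ContDiff ℝ 1 (fun p : ℝ × ℝ => x₁ p.1 p.2))
    (hx₁ode : ∀ z : ℝ, ∀ t ∈ Set.Icc (0 : ℝ) T,
      HasDerivWithinAt (fun s => x₁ s z) (α * σ₁ (x₁ t z) t) (Set.Icc 0 T) t)
    (hx₁init : ∀ z : ℝ, x₁ 0 z = z) :
    ∀ t ∈ Set.Icc (0 : ℝ) T,
      -(MI / 3) < deriv (fun w => σ₁ (x₁ t w) t) zstar ∧
        deriv (fun w => σ₁ (x₁ t w) t) zstar < -(MI / 6) := by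
  
  have hMEpos : 0 < ME := by
    obtain ⟨y, -, hy⟩ := hME.1
    rcases (show 0 ≤ ME from hy ▸ abs_nonneg _).eq_or_lt with h | h
    · rw [← h, div_zero] at hcond
      have : 0 < (3 / Real.log (13 / 12)) * (β / α) := by
        have := Real.log_pos (by norm_num : (1:ℝ) < 13 / 12)
        positivity
      linarith
    · exact h
  obtain ⟨per1, per3, hsys⟩ := hsol
  obtain ⟨p, pt, pxx, pm, cp, cpt, cpxx, cpm, dp, dpt, dpxx, dpm, dpm', chp⟩ := c2_pack σ₁ h₁C2
  obtain ⟨q, qt, qxx, qm, cq, cqt, cqxx, cqm, dq, dqt, dqxx, dqm, dqm', -⟩ := c2_pack σ₃ h₃C2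
  obtain ⟨F1x, cF1, dF1, bF1⟩ := nonlocal σ₂ hσ₂C1 hσ₂per ME hME σ₁ p per1 cp dp
  obtain ⟨F3x, cF3, dF3, bF3⟩ := nonlocal σ₂ hσ₂C1 hσ₂per ME hME σ₃ q per3 cq dq
  obtain ⟨xt, J, cxt, cJ, dxt, dJ, -⟩ := c1_pack x₁ hx₁C1
  have hw' : ∀ t z, HasDerivAt (fun w => σ₁ (x₁ t w) t) (p (x₁ t z) t * J t z) z :=
    fun t z => (dp (x₁ t z) t).comp z (dJ t z)
  simp only [(hw' _ _).deriv]
  have cx : Continuous fun r : ℝ × ℝ => x₁ r.1 r.2 := hx₁C1.continuous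
  have cs1 : Continuous fun r : ℝ × ℝ => σ₁ r.1 r.2 := h₁C2.continuous
  have hJ0 : ∀ z, J 0 z = 1 := by
    intro z
    have h := dJ 0 z
    simp only [hx₁init] at h
    exact h.unique (hasDerivAt_id z)
  rw [(dp zstar 0).deriv] at hzstar
  have hw0 : p (x₁ 0 zstar) 0 * J 0 zstar = -(MI / 4) := by
    rw [hx₁init, hJ0, hzstar, mul_one]
  rcases hT0.eq_or_lt with hT0 | hTpos
  · intro t ht
    have : t = 0 := le_antisymm (hT0 ▸ ht.2) ht.1
    rw [this, hw0]
    constructor <;> linarith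
  set F1 : ℝ → ℝ → ℝ := fun x t => ∫ y in (-1 : ℝ)..1, (1 / 2) * deriv σ₂ ((x + y) / 2) * σ₁ y t
    with hF1
  set F3 : ℝ → ℝ → ℝ := fun x t => ∫ y in (-1 : ℝ)..1, (1 / 2) * deriv σ₂ ((x + y) / 2) * σ₃ y t
    with hF3
  have sqd : ∀ (s sx : ℝ → ℝ → ℝ), (∀ x t, HasDerivAt (fun y => s y t) (sx x t) x) →
      ∀ x t, deriv (fun y => (s y t) ^ 2) x = 2 * (s x t * sx x t) := by
    intro s sx h x t
    have h2 := (h x t).mul (h x t)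
    have e : (fun y => (s y t) ^ 2) = (fun y => s y t) * fun y => s y t := by
      funext y; simp [sq]
    rw [e, h2.deriv]; ring
  have eq1 : ∀ t ∈ Icc 0 T, ∀ x, pt x t = -(α * (σ₁ x t * p x t)) - (β / 2) * F3 x t := by
    intro t ht x
    have h := (hsys x t ht).1
    rw [eq_of_derivWithin hTpos ht _ _ (dpt x t), sqd σ₁ p dp] at h
    simp only [hF3]; linarith
  have eq3 : ∀ t ∈ Icc 0 T, ∀ x, qt x t = -((-α) * (σ₃ x t * q x t)) - (-(β / 2)) * F1 x t := by
    intro t ht x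
    have h := (hsys x t ht).2
    rw [eq_of_derivWithin hTpos ht _ _ (dqt x t), sqd σ₃ q dq] at h
    simp only [hF1]; linarith
  set K := β / 2 * ME with hKdef
  have hK : 0 < K := by positivity
  have b3 : ∀ x t, |(β / 2) * F3x x t| ≤ K * ∫ y in (0:ℝ)..1, |q y t| := by
    intro x t
    rw [abs_mul, abs_of_pos (by positivity : 0 < β / 2), hKdef, mul_assoc]
    exact mul_le_mul_of_nonneg_left (bF3 x t) (by positivity)
  have b1 : ∀ x t, |(-(β / 2)) * F1x x t| ≤ K * ∫ y in (0:ℝ)..1, |p y t| := by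
    intro x t
    rw [abs_mul, abs_neg, abs_of_pos (by positivity : 0 < β / 2), hKdef, mul_assoc]
    exact mul_le_mul_of_nonneg_left (bF1 x t) (by positivity)
  have hMI' : MI = (∫ x in (0 : ℝ)..1, |p x 0|) + ∫ x in (0 : ℝ)..1, |q x 0| := by
    rw [hMI]; simp only [(dp _ _).deriv, (dq _ _).deriv]
  have tv := tv_bound_s10 α K T MI hK p q cp cq hMI'
    (fun ε hε => by
      have := energy σ₁ p pt pxx pm per1 cp cpxx cpm dp dpxx dpm dpm' α (Icc 0 T)
        (fun x t => (β / 2) * F3 x t) (fun x t => (β / 2) * F3x x t) _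
        (continuous_const.mul cF3) (fun x t => (dF3 x t).const_mul _) b3 eq1 ε hε
      rwa [abs_of_pos hα] at this)
    (fun ε hε => by
      have := energy σ₃ q qt qxx qm per3 cq cqxx cqm dq dqxx dqm dqm' (-α) (Icc 0 T)
        (fun x t => (-(β / 2)) * F1 x t) (fun x t => (-(β / 2)) * F1x x t) _
        (continuous_const.mul cF1) (fun x t => (dF1 x t).const_mul _) b1 eq3 ε hε
      rwa [abs_neg, abs_of_pos hα] at this)
  have cF3' : Continuous fun r : ℝ × ℝ => F3 r.1 r.2 := by
    have k1 : Continuous (deriv σ₂) := hσ₂C1.continuous_deriv (by norm_num)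
    have k2 : Continuous fun r : (ℝ × ℝ) × ℝ => σ₃ r.2 r.1.2 :=
      h₃C2.continuous.comp (by fun_prop : Continuous fun r : (ℝ × ℝ) × ℝ => (r.2, r.1.2))
    exact continuous_param (fun x t y => (1 / 2) * deriv σ₂ ((x + y) / 2) * σ₃ y t)
      (by fun_prop) _ _
  -- compositions with the flow, in the variables `(z, s)`
  have cflow : Continuous fun r : ℝ × ℝ => (x₁ r.2 r.1, r.2) :=
    (cx.comp continuous_swap).prodMk continuous_snd
  have cJ' : Continuous fun r : ℝ × ℝ => J r.2 r.1 := cJ.comp continuous_swap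
  have f1 : Continuous fun r : ℝ × ℝ => σ₁ (x₁ r.2 r.1) r.2 := cs1.comp cflow
  have f2 : Continuous fun r : ℝ × ℝ => p (x₁ r.2 r.1) r.2 := cp.comp cflow
  have f3 : Continuous fun r : ℝ × ℝ => F3 (x₁ r.2 r.1) r.2 := cF3'.comp cflow
  have f4 : Continuous fun r : ℝ × ℝ => F3x (x₁ r.2 r.1) r.2 := cF3.comp cflow
  have slz : ∀ (g : ℝ → ℝ → ℝ), (Continuous fun r : ℝ × ℝ => g r.1 r.2) → ∀ z,
      Continuous fun s => g z s := fun g hg z => hg.comp (by fun_prop : Continuous fun s => (z, s))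
  have ftc : ∀ (f f' : ℝ → ℝ), Continuous f → Continuous f' →
      (∀ s ∈ Icc 0 T, HasDerivWithinAt f (f' s) (Icc 0 T) s) → ∀ t ∈ Icc 0 T,
      f t = f 0 + ∫ s in (0:ℝ)..t, f' s := by
    intro f f' cf cf' hd t ht
    rw [intervalIntegral.integral_eq_sub_of_hasDeriv_right_of_le ht.1 cf.continuousOn ?_
      (cf'.intervalIntegrable _ _)]
    · ring
    · intro s hs
      have hs' : s ∈ Ioo 0 T := ⟨hs.1, hs.2.trans_le ht.2⟩
      exact ((hd s (Ioo_subset_Icc_self hs')).hasDerivAt (Icc_mem_nhds hs'.1 hs'.2)).hasDerivWithinAt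
  have ix : ∀ z, ∀ t ∈ Icc 0 T, x₁ t z = z + ∫ s in (0:ℝ)..t, α * σ₁ (x₁ s z) s := by
    intro z t ht
    have := ftc (fun s => x₁ s z) (fun s => α * σ₁ (x₁ s z) s)
      (slz (fun z s => x₁ s z) (cx.comp continuous_swap) z)
      (continuous_const.mul (slz (fun z s => σ₁ (x₁ s z) s) f1 z)) (hx₁ode z) t ht
    simpa only [hx₁init] using this
  have is : ∀ z, ∀ t ∈ Icc 0 T, σ₁ (x₁ t z) t
      = σ₁ z 0 + ∫ s in (0:ℝ)..t, -((β / 2) * F3 (x₁ s z) s) := by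
    intro z t ht
    have := ftc (fun s => σ₁ (x₁ s z) s) (fun s => -((β / 2) * F3 (x₁ s z) s))
      (slz (fun z s => σ₁ (x₁ s z) s) f1 z) (continuous_const.mul (slz (fun z s => F3 (x₁ s z) s) f3 z)).neg
      (fun s hs => (chp _ _ s _ (hx₁ode z s hs)).congr_deriv (by
        rw [eq1 s hs]; ring)) t ht
    simpa only [hx₁init] using this
  refine bootstrap_ode α K T MI hα hK hMIpos hT ?_ (fun t => p (x₁ t zstar) t * J t zstar)
    (fun t => J t zstar) (fun t => (β / 2) * F3x (x₁ t zstar) t)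
    ((slz (fun z s => p (x₁ s z) s) f2 zstar).mul (slz (fun z s => J s z) cJ' zstar)) (slz (fun z s => J s z) cJ' zstar)
    (continuous_const.mul (slz (fun z s => F3x (x₁ s z) s) f4 zstar)) ?_ ?_ ?_
  · have hl := Real.log_pos (by norm_num : (1:ℝ) < 13 / 12)
    rw [← Real.lt_log_iff_exp_lt (by norm_num)]
    have h1 : K * T ≤ K * (6 / (α * MI)) := mul_le_mul_of_nonneg_left hT hK.le
    refine h1.trans_lt ?_
    rw [gt_iff_lt, lt_div_iff₀ hMEpos] at hcond
    rw [hKdef, ← mul_div_assoc, div_lt_iff₀ (by positivity)]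
    have h2 := mul_lt_mul_of_pos_left hcond (mul_pos hl hα)
    have h3 : Real.log (13 / 12) * α * (3 / Real.log (13 / 12) * (β / α) * ME) = 3 * β * ME := by
      field_simp
    rw [h3] at h2
    linarith
  · intro t ht
    have h1 := dJ t zstar
    have e : (fun z => x₁ t z) = fun z => z + ∫ s in (0:ℝ)..t, α * σ₁ (x₁ s z) s :=
      funext fun z => ix z t ht
    have h2 := (hasDerivAt_id zstar).add (hasDerivAt_param (fun z s => α * σ₁ (x₁ s z) s)
      (fun z s => α * (p (x₁ s z) s * J s z)) (continuous_const.mul f1)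
      (continuous_const.mul (f2.mul cJ')) (fun z s => (hw' s z).const_mul α) 0 t zstar)
    rw [e] at h1
    rw [h1.unique h2, intervalIntegral.integral_const_mul]
  · intro t ht
    have h1 := hw' t zstar
    have e : (fun z => σ₁ (x₁ t z) t)
        = fun z => σ₁ z 0 + ∫ s in (0:ℝ)..t, -((β / 2) * F3 (x₁ s z) s) :=
      funext fun z => is z t ht
    have h2 := (dp zstar 0).add (hasDerivAt_param (fun z s => -((β / 2) * F3 (x₁ s z) s))
      (fun z s => -((β / 2) * (F3x (x₁ s z) s * J s z))) (continuous_const.mul f3).neg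
      (continuous_const.mul (f4.mul cJ')).neg
      (fun z s => (((dF3 (x₁ s z) s).comp z (dJ s z)).const_mul (β / 2)).neg) 0 t zstar)
    rw [e] at h1
    rw [h1.unique h2, hzstar, intervalIntegral.integral_neg, sub_eq_add_neg]
    simp only [mul_assoc]
  · intro t ht
    exact (b3 _ t).trans (mul_le_mul_of_nonneg_left (tv t ht) hK.le)
end

section
/- Let a < b and let g_N : [a,b] → ℝ be functions that are uniformly bounded and of uniformly bounded total variation, and set χ_N(t) := χ_N(a) + ∫_a^t g_N(τ) dτ with χ_N(a) a convergent sequence. Suppose: (i) χ_N converges pointwise on [a,b] to a function χ; (ii) g_N(t) → s(t) for every t ∈ [a,b]; (iii) the variation functions V_N(t) := Var_{[a,t]} g_N converge pointwise to a function s̄ on [a,b]. If s̄ is continuous at a point t₀ ∈ (a,b), then χ is differentiable at t₀ and χ'(t₀) = s(t₀). -/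
open MeasureTheory Filter Set Topology

/-- derivative-convergence lemma for limits of approximate
characteristics.  If `χ_N(t) = χ_N(a) + ∫_a^t g_N`, the `g_N` are uniformly
bounded with uniformly bounded variation, `χ_N → χ` and `g_N → s` pointwise,
and the variation functions `t ↦ Var_{[a,t]} g_N` converge pointwise to `s̄`,
then at every interior continuity point `t₀` of `s̄` the limit `χ` is
differentiable with `χ'(t₀) = s(t₀)`. -/
theorem derivative_of_limit_characteristic
    (a b : ℝ) (hab : a < b)
    (g : ℕ → ℝ → ℝ) (χN : ℕ → ℝ → ℝ) (χ s sbar : ℝ → ℝ)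
    (hgmeas : ∀ N, Measurable (g N))
    (C : ℝ) (hbd : ∀ N, ∀ t ∈ Set.Icc a b, |g N t| ≤ C)
    (V : ℝ) (hvar : ∀ N, eVariationOn (g N) (Set.Icc a b) ≤ ENNReal.ofReal V)
    (hχdef : ∀ N, ∀ t ∈ Set.Icc a b, χN N t = χN N a + ∫ τ in a..t, g N τ)
    (hχconv : ∀ t ∈ Set.Icc a b, Tendsto (fun N => χN N t) atTop (𝓝 (χ t)))
    (hgconv : ∀ t ∈ Set.Icc a b, Tendsto (fun N => g N t) atTop (𝓝 (s t)))
    (hVconv : ∀ t ∈ Set.Icc a b,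
      Tendsto (fun N => (eVariationOn (g N) (Set.Icc a t)).toReal)
        atTop (𝓝 (sbar t)))
    (t₀ : ℝ) (ht₀ : t₀ ∈ Set.Ioo a b)
    (hcont : ContinuousWithinAt sbar (Set.Icc a b) t₀) :
    HasDerivAt χ (s t₀) t₀ := by
  have hta : t₀ ∈ Icc a b := Ioo_subset_Icc_self ht₀
  have hnhds : Icc a b ∈ 𝓝 t₀ := Icc_mem_nhds ht₀.1 ht₀.2
  -- increments of `g N` are controlled by the variation function
  have hinc : ∀ N, ∀ x ∈ Icc a b, ∀ y ∈ Icc a b, x ≤ y → |g N y - g N x| ≤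
      (eVariationOn (g N) (Icc a y)).toReal - (eVariationOn (g N) (Icc a x)).toReal := by
    intro N x hx y hy hxy
    have hfin : ∀ u v, a ≤ u → v ≤ b → eVariationOn (g N) (Icc u v) ≠ ⊤ := fun u v hu hv =>
      ne_top_of_le_ne_top (ne_top_of_le_ne_top ENNReal.ofReal_ne_top (hvar N))
        (eVariationOn.mono _ (Icc_subset_Icc hu hv))
    have hadd := eVariationOn.Icc_add_Icc (g N) (s := univ) hx.1 hxy (mem_univ x)
    simp only [univ_inter] at hadd
    rw [← hadd, ENNReal.toReal_add (hfin _ _ le_rfl hx.2) (hfin _ _ hx.1 hy.2)]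
    have h := BoundedVariationOn.dist_le (f := g N) (s := Icc x y) (hfin x y hx.1 hy.2)
      (right_mem_Icc.2 hxy) (left_mem_Icc.2 hxy)
    rw [Real.dist_eq] at h
    linarith
  have hsinc0 : ∀ x ∈ Icc a b, ∀ y ∈ Icc a b, x ≤ y → |s y - s x| ≤ sbar y - sbar x := by
    intro x hx y hy hxy
    exact le_of_tendsto_of_tendsto' ((hgconv y hy).sub (hgconv x hx)).abs
      ((hVconv y hy).sub (hVconv x hx)) (fun N => hinc N x hx y hy hxy)
  have hsinc : ∀ x ∈ Icc a b, |s x - s t₀| ≤ |sbar x - sbar t₀| := by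
    intro x hx
    rcases le_total x t₀ with h | h
    · rw [abs_sub_comm, abs_sub_comm (sbar x)]
      exact (hsinc0 x hx t₀ hta h).trans (le_abs_self _)
    · exact (hsinc0 t₀ hta x hx h).trans (le_abs_self _)
  have hscont : ContinuousAt s t₀ := by
    have hc : ContinuousAt sbar t₀ := hcont.continuousAt hnhds
    rw [ContinuousAt, tendsto_iff_dist_tendsto_zero] at hc ⊢
    refine squeeze_zero' (Eventually.of_forall fun _ => dist_nonneg) ?_ hc
    filter_upwards [hnhds] with x hx
    simpa [Real.dist_eq] using hsinc x hx
  -- a globally measurable version of `s`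
  have hs'meas : Measurable ((Icc a b).indicator s) := by
    refine measurable_of_tendsto_metrizable (f := fun N => (Icc a b).indicator (g N))
      (fun N => (hgmeas N).indicator measurableSet_Icc) ?_
    rw [tendsto_pi_nhds]
    intro x
    by_cases hx : x ∈ Icc a b
    · simpa [hx] using hgconv x hx
    · simp [hx]
  have hs'eq : (Icc a b).indicator s =ᶠ[𝓝 t₀] s := by
    filter_upwards [hnhds] with x hx using indicator_of_mem hx s
  have hsbd : ∀ x ∈ Icc a b, |s x| ≤ C := fun x hx =>
    le_of_tendsto' (hgconv x hx).abs (fun N => hbd N x hx)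
  have hC : 0 ≤ C := (abs_nonneg _).trans (hsbd t₀ hta)
  have hs'int : IntervalIntegrable ((Icc a b).indicator s) volume a t₀ := by
    refine (intervalIntegrable_const (c := C)).mono_fun hs'meas.aestronglyMeasurable ?_
    refine Eventually.of_forall fun x => ?_
    by_cases hx : x ∈ Icc a b
    · simpa [hx, abs_of_nonneg hC] using hsbd x hx
    · simp [hx]
  have hχ : ∀ t ∈ Icc a b, χ t = χ a + ∫ τ in a..t, (Icc a b).indicator s τ := by
    intro t ht
    have hsub : ∀ x ∈ uIoc a t, x ∈ Icc a b := by
      intro x hx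
      rw [uIoc_of_le ht.1] at hx
      exact ⟨hx.1.le, hx.2.trans ht.2⟩
    have hlim : Tendsto (fun N => ∫ τ in a..t, g N τ) atTop
        (𝓝 (∫ τ in a..t, (Icc a b).indicator s τ)) := by
      refine intervalIntegral.tendsto_integral_filter_of_dominated_convergence (fun _ => C)
        (Eventually.of_forall fun N => (hgmeas N).aestronglyMeasurable)
        (Eventually.of_forall fun N => Eventually.of_forall fun x hx => hbd N x (hsub x hx))
        intervalIntegrable_const (Eventually.of_forall fun x hx => ?_)
      rw [indicator_of_mem (hsub x hx)]
      exact hgconv x (hsub x hx)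
    refine tendsto_nhds_unique (hχconv t ht) ?_
    exact ((hχconv a (left_mem_Icc.2 hab.le)).add hlim).congr fun N => (hχdef N t ht).symm
  have hd := intervalIntegral.integral_hasDerivAt_right hs'int
    (hs'meas.stronglyMeasurable.stronglyMeasurableAtFilter) (hscont.congr hs'eq.symm)
  rw [indicator_of_mem hta] at hd
  refine (hd.const_add (χ a)).congr_of_eventuallyEq ?_
  filter_upwards [hnhds] with t ht using hχ t ht
end
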